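/- If X is a real Hilbert space, regarded as a pointed metric space with the norm metric and base point 0, then the Lipschitz-free space F(X) has property (V*). -/

import Mathlib

open Filter Topology Metric Set

noncomputable section

/-- A formal series `∑ yₙ` in a normed space `Y` is weakly unconditionally Cauchy (WUC)
if `∑ |⟨φ, yₙ⟩| < ∞` for every continuous linear functional `φ` on `Y`. -/
def IsWUC {Y : Type*} [SeminormedAddCommGroup Y] [NormedSpace ℝ Y] (y : ℕ → Y) : Prop :=
  ∀ φ : Y →L[ℝ] ℝ, Summable fun n => |φ (y n)|

/-- `Γ` is a (V*)-set in `X`: for every WUC series `∑ fₙ` in the dual `X*`,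
`sup_{x ∈ Γ} |⟨x, fₙ⟩| → 0`. -/
def IsVStarSet {X : Type*} [SeminormedAddCommGroup X] [NormedSpace ℝ X] (Γ : Set X) : Prop :=
  ∀ f : ℕ → (X →L[ℝ] ℝ), IsWUC f →
    ∀ ε > (0 : ℝ), ∀ᶠ n in atTop, ∀ x ∈ Γ, |f n x| ≤ ε

/-- `Γ` is relatively weakly compact: its closure in the weak topology is compact. -/
def RelWeaklyCompact {X : Type*} [SeminormedAddCommGroup X] [NormedSpace ℝ X]
    (Γ : Set X) : Prop :=
  IsCompact (closure ((toWeakSpace ℝ X) '' Γ))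

/-- A normed space has Pełczyński's property (V*) if every (V*)-set is relatively
weakly compact. -/
def HasPropertyVStar (X : Type*) [SeminormedAddCommGroup X] [NormedSpace ℝ X] : Prop :=
  ∀ Γ : Set X, IsVStarSet Γ → RelWeaklyCompact Γ

/-- `F`, together with the map `δ : M → F`, is (a realization of) the Lipschitz-free space
over the pointed metric space `(M, o)`: `δ` is a base-point-preserving isometric embedding
whose range has dense linear span, and every Lipschitz function `f : M → ℝ` vanishing at
the base point lifts to a continuous linear functional of norm at most `Lip(f)` (this
characterizes `F(M)`, with dual `Lip₀(M)`, up to isometric isomorphism). -/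
structure IsLipschitzFree {M : Type*} [MetricSpace M] (o : M)
    {F : Type*} [NormedAddCommGroup F] [NormedSpace ℝ F] (δ : M → F) : Prop where
  isometry : Isometry δ
  map_base : δ o = 0
  dense_span : Dense (Submodule.span ℝ (Set.range δ) : Set F)
  lift : ∀ (L : NNReal) (f : M → ℝ), LipschitzWith L f → f o = 0 →
    ∃ φ : F →L[ℝ] ℝ, ‖φ‖ ≤ L ∧ ∀ x, φ (δ x) = f x

/-- The subspace of `F` corresponding to the Lipschitz-free space `F(S)` over a subset
`S ⊆ M`: the closed linear span of `δ(S)`. -/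
def freeSpan {M : Type*} [MetricSpace M] {F : Type*} [NormedAddCommGroup F]
    [NormedSpace ℝ F] (δ : M → F) (S : Set M) : Submodule ℝ F :=
  (Submodule.span ℝ (δ '' S)).topologicalClosure

theorem mem_freeSpan {M : Type*} [MetricSpace M] {F : Type*} [NormedAddCommGroup F]
    [NormedSpace ℝ F] (δ : M → F) {S : Set M} {x : M} (hx : x ∈ S) :
    δ x ∈ freeSpan δ S :=
  (Submodule.span ℝ (δ '' S)).le_topologicalClosure
    (Submodule.subset_span ⟨x, hx, rfl⟩)

open NormedSpace Bornology
open scoped NNReal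

/-!
Let `Γ` be a (V*)-set in `F(X)` that is not relatively weakly compact. James' argument yields
`xₖ ∈ Γ` and functionals `φᵢ` of norm at most `1` with `φᵢ(xₖ) ≥ θ` for `i ≤ k` and `φᵢ(xₖ) = 0`
for `k < i`. By the Hahn–Banach theorem, `xₖ` is close to a finitely supported element `yₖ` for
which `|φ(yₖ)| ≤ νₖ(w)` whenever `w` bounds the local Lipschitz constants of `φ`; here `νₖ` is a
positive functional on the bounded continuous functions, built from averages over segments. Let `μ`
be a weak-star cluster point of the `νₖ`.

By the parallelogram law in the dual of `X`, the Dirichlet energy `μ(‖f'‖²)` satisfies a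
parallelogram inequality, so that half the difference of two almost minimizers taken from far-apart
convex blocks of the `φᵢ` has small energy, while it is still large at some `xₖ`. Since (V*)-sets
are tight, this function may be truncated to be uniformly small. Multiplying it by a cutoff `h` then
gives a function with local Lipschitz constant about `‖f'‖ h`, and one replaces `h` by
`h (1 - ‖f'‖)` before the next step. These constants telescope, so the functions form a WUC series;
as `μ(1 - h)` stays small, the products remain large on `Γ`, which contradicts the (V*) property.
-/

section WUC

variable {Y : Type*} [SeminormedAddCommGroup Y] [NormedSpace ℝ Y]

theorem isWUC_of_summable_norm {y : ℕ → Y} (hy : Summable fun n ↦ ‖y n‖) : IsWUC y := fun φ ↦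
  (hy.mul_left ‖φ‖).of_nonneg_of_le (fun _ ↦ abs_nonneg _) fun n ↦ φ.le_opNorm (y n)

theorem isWUC_of_norm_sum_smul_le {y : ℕ → Y} {C : ℝ}
    (hy : ∀ (s : Finset ℕ) (c : ℕ → ℝ), (∀ n, |c n| ≤ 1) → ‖∑ n ∈ s, c n • y n‖ ≤ C) :
    IsWUC y := by
  intro φ
  refine summable_of_sum_le (c := ‖φ‖ * C) (fun _ ↦ abs_nonneg _) fun s ↦ ?_
  calc ∑ n ∈ s, |φ (y n)| = φ (∑ n ∈ s, (SignType.sign (φ (y n)) : ℝ) • y n) := by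
        simp only [map_sum, map_smul, smul_eq_mul, sign_mul_self]
    _ ≤ ‖φ‖ * ‖∑ n ∈ s, (SignType.sign (φ (y n)) : ℝ) • y n‖ :=
        (le_abs_self _).trans (φ.le_opNorm _)
    _ ≤ ‖φ‖ * C := by
        gcongr
        exact hy s _ fun n ↦ by cases SignType.sign (φ (y n)) <;> simp

theorem IsVStarSet.isBounded {Γ : Set Y} (hΓ : IsVStarSet Γ) : IsBounded Γ := by
  rw [isBounded_iff_forall_norm_le]
  by_contra! hunbounded
  choose x hxΓ hx using fun n : ℕ ↦ hunbounded (4 ^ n)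
  choose g hg hgx using fun n ↦ exists_dual_vector'' ℝ (x n)
  have hwuc : IsWUC fun n ↦ (1 / 2 : ℝ) ^ n • g n := by
    refine isWUC_of_summable_norm (summable_geometric_two.of_nonneg_of_le
      (fun _ ↦ norm_nonneg _) fun n ↦ ?_)
    rw [norm_smul, Real.norm_of_nonneg (by positivity)]
    exact mul_le_of_le_one_right (by positivity) (hg n)
  obtain ⟨n, hn⟩ := (hΓ _ hwuc (1 / 2) one_half_pos).exists
  have hlt : (1 : ℝ) < |((1 / 2 : ℝ) ^ n • g n) (x n)| :=
    calc (1 : ℝ) ≤ (1 / 2 * 4) ^ n := one_le_pow₀ (by norm_num)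
      _ = (1 / 2) ^ n * 4 ^ n := mul_pow _ _ _
      _ < (1 / 2) ^ n * ‖x n‖ := by gcongr; exact hx n
      _ = ((1 / 2 : ℝ) ^ n • g n) (x n) := by simp [hgx]
      _ ≤ _ := le_abs_self _
  linarith [hn _ (hxΓ n)]

end WUC

section James

variable {F : Type*} [NormedAddCommGroup F] [NormedSpace ℝ F]

theorem exists_pos_le_norm_sub_of_forall_ne {E G : Type*} [NormedAddCommGroup E]
    [NormedSpace ℝ E] [CompleteSpace E] [NormedAddCommGroup G] [NormedSpace ℝ G] (T : E →ₗᵢ[ℝ] G)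
    {y : G} (hy : ∀ x, T x ≠ y) : ∃ d > 0, ∀ x, d ≤ ‖y - T x‖ := by
  have hclosed : IsClosed (range T) := T.isometry.isClosedEmbedding.isClosed_range
  refine ⟨infDist y (range T), (hclosed.notMem_iff_infDist_pos ⟨_, mem_range_self 0⟩).1 ?_,
    fun x ↦ (infDist_le_dist_of_mem (mem_range_self x)).trans_eq (dist_eq_norm _ _)⟩
  rintro ⟨x, hx⟩
  exact hy x hx

theorem exists_strongDual_eqOn_norm_le {E : Type*} [SeminormedAddCommGroup E] [NormedSpace ℝ E]
    (N : Submodule ℝ E) (y : StrongDual ℝ E) {c : ℝ} (hc : ∀ v ∈ N, ‖v‖ ≤ 1 → y v ≤ c) :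
    ∃ z : StrongDual ℝ E, ‖z‖ ≤ c ∧ EqOn z y N := by
  have hc0 : 0 ≤ c := by simpa using hc 0 N.zero_mem (by simp)
  obtain ⟨z, hz, hznorm⟩ := exists_extension_norm_eq N (y ∘L N.subtypeL)
  refine ⟨z, ?_, fun v hv ↦ hz ⟨v, hv⟩⟩
  rw [hznorm]
  refine ContinuousLinearMap.opNorm_le_of_unit_norm hc0 fun v hv ↦ abs_le.2 ⟨?_, hc v v.2 hv.le⟩
  have := hc (-v) (N.neg_mem v.2) (by simpa using hv.le)
  rw [map_neg] at this
  exact neg_le.1 this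

theorem exists_bidual_of_not_relWeaklyCompact {Γ : Set F} (hΓ : IsBounded Γ)
    (hcpt : ¬ RelWeaklyCompact Γ) :
    ∃ y, (∀ x, inclusionInDoubleDual ℝ F x ≠ y) ∧ ∀ (S : Finset (StrongDual ℝ F)), ∀ ε > 0,
      ∃ x ∈ Γ, ∀ φ ∈ S, |φ x - y φ| < ε := by
  have hrange := mt (isCompact_closure_of_isBounded ℝ F (toWeakSpace ℝ F '' Γ)
    (by rwa [preimage_image_eq _ (toWeakSpace ℝ F).injective])) hcpt
  obtain ⟨y, hy, hyF⟩ := not_subset.1 hrange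
  refine ⟨WeakDual.toStrongDual y, ?_, fun S ε hε ↦ ?_⟩
  · exact fun x hx ↦ hyF ⟨toWeakSpace ℝ F x, WeakDual.toStrongDual.injective hx⟩
  have hnhds : {z : WeakDual ℝ (StrongDual ℝ F) | ∀ φ ∈ S, |z φ - y φ| < ε} ∈ 𝓝 y := by
    refine (S.eventually_all).2 fun φ _ ↦ ?_
    have hcont := ((WeakDual.eval_continuous φ).sub continuous_const).abs.tendsto
      (f := fun z : WeakDual ℝ (StrongDual ℝ F) ↦ |z φ - y φ|) y
    exact hcont.eventually_lt_const (by simpa using hε)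
  obtain ⟨_, hz, _, ⟨x, hx, rfl⟩, rfl⟩ := mem_closure_iff_nhds.1 hy _ hnhds
  exact ⟨x, hx, hz⟩

/-- A form of Helly's theorem. -/
theorem exists_norm_le_one_forall_apply_eq_zero_lt_apply {E V : Type*} [SeminormedAddCommGroup E]
    [NormedSpace ℝ E] [AddCommGroup V] [Module ℝ V] (T : V →ₗ[ℝ] StrongDual ℝ E)
    {y : StrongDual ℝ E} {d c : ℝ} (hd : ∀ x, d ≤ ‖y - T x‖) (hc : c < d) (S : Finset V) :
    ∃ φ : E, ‖φ‖ ≤ 1 ∧ (∀ x ∈ S, T x φ = 0) ∧ c < y φ := by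
  by_contra! hle
  let N : Submodule ℝ E := ⨅ x : S, (T x).toLinearMap.ker
  obtain ⟨z, hz, hzy⟩ := exists_strongDual_eqOn_norm_le N y (c := c) fun φ hφN hφ ↦
    hle φ hφ (by simpa [N] using hφN)
  have hspan := mem_span_of_iInf_ker_le_ker (L := fun x : S ↦ (T x).toLinearMap)
    (K := (y - z).toLinearMap) fun φ hφ ↦ sub_eq_zero.2 (hzy hφ).symm
  obtain ⟨a, ha⟩ := (Submodule.mem_span_range_iff_exists_fun ℝ).1 hspan
  have hyz : y - T (∑ i, a i • (i : V)) = z := by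
    ext φ
    have := LinearMap.congr_fun ha φ
    simp only [LinearMap.coe_sum, Finset.sum_apply, LinearMap.smul_apply, smul_eq_mul,
      ContinuousLinearMap.coe_coe, sub_apply] at this
    simp [-Finset.univ_eq_attach, this]
  exact (hc.trans_le ((hd _).trans_eq (congrArg norm hyz))).not_ge hz

/-- A James pair of sequences: a triangular array witnessing the failure of weak compactness. -/
structure IsJamesSequence (θ : ℝ) (φ : ℕ → StrongDual ℝ F) (x : ℕ → F) : Prop where
  norm_le_one : ∀ i, ‖φ i‖ ≤ 1
  le_apply : ∀ i k, i ≤ k → θ ≤ φ i (x k)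
  apply_eq_zero : ∀ i k, k < i → φ i (x k) = 0

theorem exists_isJamesSequence_of_not_relWeaklyCompact [CompleteSpace F] {Γ : Set F}
    (hΓ : IsBounded Γ) (hcpt : ¬ RelWeaklyCompact Γ) :
    ∃ θ > 0, ∃ φ x, (∀ n, x n ∈ Γ) ∧ IsJamesSequence (F := F) θ φ x := by
  obtain ⟨y, hy, happrox⟩ := exists_bidual_of_not_relWeaklyCompact hΓ hcpt
  obtain ⟨d, hd, hdist⟩ := exists_pos_le_norm_sub_of_forall_ne (G := StrongDual ℝ (StrongDual ℝ F))
    (inclusionInDoubleDualLi (E := F) ℝ) hy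
  have hHelly (S : Finset F) : ∃ φ : StrongDual ℝ F, ‖φ‖ ≤ 1 ∧ (∀ x ∈ S, φ x = 0) ∧ d / 2 < y φ :=
    exists_norm_le_one_forall_apply_eq_zero_lt_apply
      (inclusionInDoubleDualLi (E := F) ℝ).toLinearMap hdist (half_lt_self hd) S
  obtain ⟨p, hp, hpair⟩ := exists_seq_of_forall_finset_exists
    (fun p : StrongDual ℝ F × F ↦ ‖p.1‖ ≤ 1 ∧ p.2 ∈ Γ ∧ d / 2 < y p.1 ∧ |p.1 p.2 - y p.1| < d / 4)
    (fun p q ↦ q.1 p.2 = 0 ∧ |p.1 q.2 - y p.1| < d / 4) fun s _ ↦ by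
      classical
      obtain ⟨ψ, hψ, hψ0, hyψ⟩ := hHelly (s.image Prod.snd)
      obtain ⟨z, hz, hzψ⟩ := happrox (insert ψ (s.image Prod.fst)) (d / 4) (by positivity)
      exact ⟨(ψ, z), ⟨hψ, hz, hyψ, hzψ ψ (Finset.mem_insert_self _ _)⟩, fun p hp ↦
        ⟨hψ0 _ (Finset.mem_image_of_mem _ hp),
          hzψ _ (Finset.mem_insert_of_mem (Finset.mem_image_of_mem _ hp))⟩⟩
  refine ⟨d / 4, by positivity, fun n ↦ (p n).1, fun n ↦ (p n).2, fun n ↦ (hp n).2.1,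
    fun i ↦ (hp i).1, fun i k hik ↦ ?_, fun i k hki ↦ (hpair k i hki).1⟩
  have hclose : |(p i).1 (p k).2 - y (p i).1| < d / 4 := by
    rcases hik.eq_or_lt with rfl | hlt
    · exact (hp i).2.2.2
    · exact (hpair i k hlt).2
  linarith [(abs_lt.1 hclose).1, (hp i).2.2.1]

end James

/-- Truncation of `t` to the interval `[-a, a]`, for `0 ≤ a`. -/
def clamp (a t : ℝ) : ℝ := max (-a) (min a t)

section Clamp

variable {a t : ℝ}

theorem abs_clamp_le (ha : 0 ≤ a) (t : ℝ) : |clamp a t| ≤ a :=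
  abs_le.2 ⟨le_max_left _ _, max_le (by linarith) (min_le_left _ _)⟩

theorem clamp_eq_self (h : |t| ≤ a) : clamp a t = t := by
  rw [clamp, min_eq_right (abs_le.1 h).2, max_eq_right (abs_le.1 h).1]

theorem abs_sub_clamp_le (ha : 0 ≤ a) (t : ℝ) : |t - clamp a t| ≤ |t| := by
  unfold clamp
  grind

theorem lipschitzWith_clamp {M : Type*} [PseudoEMetricSpace M] {r f : M → ℝ} {K L : ℝ≥0}
    (hr : LipschitzWith K r) (hf : LipschitzWith L f) :
    LipschitzWith (max K L) fun x ↦ clamp (r x) (f x) := by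
  simpa [clamp] using hr.neg.max (hr.min hf)

end Clamp

section Lipschitz

variable {M : Type*} [PseudoMetricSpace M]

theorem lipschitzWith_const_mul {f : M → ℝ} {K : ℝ≥0} (hf : LipschitzWith K f) (c : ℝ≥0) :
    LipschitzWith (c * K) fun x ↦ c * f x := by
  simpa [Function.comp_def] using (lipschitzWith_smul (c : ℝ)).comp hf

theorem lipschitzWith_mul_max_dist_sub (c : ℝ≥0) (o : M) (R : ℝ) :
    LipschitzWith c fun x ↦ c * max (dist x o - R) 0 := by
  simpa using lipschitzWith_const_mul
    (((LipschitzWith.dist_left o).sub (LipschitzWith.const R)).max_const 0) c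

end Lipschitz

theorem exists_finset_mem_span_image_of_mem_span_range {ι R V : Type*} [Semiring R]
    [AddCommMonoid V] [Module R V] {v : ι → V} {x : V} (hx : x ∈ Submodule.span R (range v)) :
    ∃ D : Finset ι, x ∈ Submodule.span R (v '' D) := by
  obtain ⟨c, rfl⟩ := Finsupp.mem_span_range_iff_exists_finsupp.1 hx
  exact ⟨c.support, Submodule.sum_mem _ fun i hi ↦
    Submodule.smul_mem _ _ (Submodule.subset_span (mem_image_of_mem v hi))⟩

namespace IsLipschitzFree

variable {M : Type*} [MetricSpace M] {o : M} {F : Type*} [NormedAddCommGroup F] [NormedSpace ℝ F]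
  {δ : M → F} {φ ψ : StrongDual ℝ F} {L : ℝ≥0}

theorem lipschitzWith_apply (hδ : IsLipschitzFree o δ) (hφ : ‖φ‖ ≤ L) :
    LipschitzWith L fun x ↦ φ (δ x) := by
  have hφL : ‖φ‖₊ * 1 ≤ L := (mul_one _).trans_le hφ
  exact (φ.lipschitz.comp hδ.isometry.lipschitz).weaken hφL

theorem apply_base (hδ : IsLipschitzFree o δ) (φ : StrongDual ℝ F) : φ (δ o) = 0 := by
  rw [hδ.map_base, map_zero]

theorem abs_apply_le (hδ : IsLipschitzFree o δ) (hφ : ‖φ‖ ≤ L) (x : M) :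
    |φ (δ x)| ≤ L * dist x o := by
  simpa [hδ.apply_base] using (hδ.lipschitzWith_apply hφ).dist_le_mul x o

theorem strongDual_ext (hδ : IsLipschitzFree o δ) (h : ∀ x, φ (δ x) = ψ (δ x)) : φ = ψ :=
  ContinuousLinearMap.ext_on hδ.dense_span (forall_mem_range.2 h)

theorem norm_le_of_lipschitzWith (hδ : IsLipschitzFree o δ)
    (hφ : LipschitzWith L fun x ↦ φ (δ x)) : ‖φ‖ ≤ L := by
  obtain ⟨ψ, hψ, hψφ⟩ := hδ.lift L _ hφ (hδ.apply_base φ)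
  rwa [← hδ.strongDual_ext hψφ]

theorem isWUC_of_lipschitzWith_sum (hδ : IsLipschitzFree o δ) {γ : ℕ → StrongDual ℝ F}
    (hγ : ∀ (s : Finset ℕ) (c : ℕ → ℝ), (∀ n, |c n| ≤ 1) →
      LipschitzWith L fun x ↦ ∑ n ∈ s, c n * γ n (δ x)) :
    IsWUC γ :=
  isWUC_of_norm_sum_smul_le fun s c hc ↦ hδ.norm_le_of_lipschitzWith (by simpa using hγ s c hc)

theorem exists_norm_le_apply_eq_clamp (hδ : IsLipschitzFree o δ) (hφ : ‖φ‖ ≤ L) {r : M → ℝ}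
    {K : ℝ≥0} (hr : LipschitzWith K r) (hr0 : 0 ≤ r o) :
    ∃ γ : StrongDual ℝ F, ‖γ‖ ≤ ↑(max K L) ∧ ∀ x, γ (δ x) = clamp (r x) (φ (δ x)) :=
  hδ.lift _ _ (lipschitzWith_clamp hr (hδ.lipschitzWith_apply hφ)) <| by
    simp [hδ.apply_base, clamp_eq_self, hr0]

theorem exists_norm_le_apply_eq_sub_clamp (hδ : IsLipschitzFree o δ) (hφ : ‖φ‖ ≤ L) {r : M → ℝ}
    {K : ℝ≥0} (hr : LipschitzWith K r) (hr0 : 0 ≤ r o) :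
    ∃ γ : StrongDual ℝ F, ‖γ‖ ≤ ↑(L + max K L) ∧
      ∀ x, γ (δ x) = φ (δ x) - clamp (r x) (φ (δ x)) := by
  obtain ⟨γ, hγ, hγφ⟩ := hδ.exists_norm_le_apply_eq_clamp hφ hr hr0
  exact ⟨φ - γ, (norm_sub_le _ _).trans (add_le_add hφ hγ), fun x ↦ by simp [hγφ]⟩

theorem isWUC_of_pairwise_disjoint_support (hδ : IsLipschitzFree o δ) {γ : ℕ → StrongDual ℝ F}
    (hγ : ∀ n, ‖γ n‖ ≤ L) (hdisj : ∀ x m n, γ m (δ x) ≠ 0 → γ n (δ x) ≠ 0 → m = n) :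
    IsWUC γ := by
  classical
  refine hδ.isWUC_of_lipschitzWith_sum (L := 2 * L) fun s c hc ↦ LipschitzWith.of_dist_le_mul
    fun x y ↦ ?_
  set u : M → Finset ℕ := fun z ↦ s.filter fun n ↦ γ n (δ z) ≠ 0
  have hcard : (u x ∪ u y).card ≤ 2 := by
    have hu : ∀ z, (u z).card ≤ 1 := fun z ↦ Finset.card_le_one.2 fun m hm n hn ↦
      hdisj z m n (Finset.mem_filter.1 hm).2 (Finset.mem_filter.1 hn).2
    exact (Finset.card_union_le _ _).trans (add_le_add (hu x) (hu y))
  have hterm : ∀ n, |c n * γ n (δ x) - c n * γ n (δ y)| ≤ L * dist x y := fun n ↦ by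
    rw [← mul_sub, abs_mul, ← Real.dist_eq]
    exact (mul_le_of_le_one_left dist_nonneg (hc n)).trans
      ((hδ.lipschitzWith_apply (hγ n)).dist_le_mul x y)
  have hsupp : ∑ n ∈ s, (c n * γ n (δ x) - c n * γ n (δ y)) =
      ∑ n ∈ u x ∪ u y, (c n * γ n (δ x) - c n * γ n (δ y)) := by
    refine (Finset.sum_subset (Finset.union_subset (Finset.filter_subset _ _)
      (Finset.filter_subset _ _)) fun n hn hnu ↦ ?_).symm
    simp only [Finset.mem_union, Finset.mem_filter, hn, true_and, not_or, not_not] at hnu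
    simp [hnu]
  calc dist (∑ n ∈ s, c n * γ n (δ x)) (∑ n ∈ s, c n * γ n (δ y))
      = |∑ n ∈ u x ∪ u y, (c n * γ n (δ x) - c n * γ n (δ y))| := by
        rw [Real.dist_eq, ← Finset.sum_sub_distrib, hsupp]
    _ ≤ (u x ∪ u y).card • (L * dist x y) :=
        (Finset.abs_sum_le_sum_abs _ _).trans (Finset.sum_le_card_nsmul _ _ _ fun n _ ↦ hterm n)
    _ ≤ 2 • (L * dist x y) := by gcongr
    _ = ↑(2 * L) * dist x y := by push_cast; ring

theorem exists_finset_forall_eqOn_abs_sub_lt (hδ : IsLipschitzFree o δ) (φ : StrongDual ℝ F)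
    (x : F) (L : ℝ≥0) {η : ℝ} (hη : 0 < η) :
    ∃ D : Finset M, ∀ γ : StrongDual ℝ F, ‖γ‖ ≤ L → (∀ z ∈ D, γ (δ z) = φ (δ z)) →
      |φ x - γ x| < η := by
  obtain ⟨r, hr, hrη⟩ := exists_pos_mul_lt hη (‖φ‖ + L)
  obtain ⟨x', hx', hx'span⟩ := Metric.dense_iff.1 hδ.dense_span x r hr
  obtain ⟨D, hD⟩ := exists_finset_mem_span_image_of_mem_span_range hx'span
  refine ⟨D, fun γ hγ hγφ ↦ ?_⟩
  have heq : γ x' = φ x' :=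
    LinearMap.eqOn_span (f := γ.toLinearMap) (g := φ.toLinearMap) (forall_mem_image.2 hγφ) hD
  calc |φ x - γ x| = ‖(φ - γ) (x - x')‖ := by simp [heq]
    _ ≤ ‖φ - γ‖ * ‖x - x'‖ := (φ - γ).le_opNorm _
    _ ≤ (‖φ‖ + L) * r := by
        gcongr
        · exact (norm_sub_le _ _).trans (by gcongr)
        · exact (mem_ball_iff_norm'.1 hx').le
    _ < η := hrη

/-- Otherwise one builds, along an increasing sequence of finite sets, functionals with disjoint
supports that are bounded below on `Γ`: each violating functional is cut down to the region left
free by the next finite set, which changes it little at the relevant point of `Γ`. -/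
theorem exists_finset_forall_abs_apply_le (hδ : IsLipschitzFree o δ) {Γ : Set F}
    (hΓ : IsVStarSet Γ) {ρ : Finset M → M → ℝ} {b : M → ℝ} {K : ℝ≥0} (hρ : Antitone ρ)
    (hρ0 : ∀ E x, 0 ≤ ρ E x) (hρK : ∀ E, LipschitzWith K (ρ E)) (hρE : ∀ E, ∀ x ∈ E, ρ E x = 0)
    (L : ℝ≥0) {ε : ℝ} (hε : 0 < ε) :
    ∃ E : Finset M, ∀ φ : StrongDual ℝ F, ‖φ‖ ≤ L → (∀ x, |φ (δ x)| ≤ b x) →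
      (∀ x, ρ E x < b x → φ (δ x) = 0) → ∀ x ∈ Γ, |φ x| ≤ ε := by
  classical
  by_contra! hbad
  choose φ hφL hφb hφρ x hxΓ hx using hbad
  choose D hD using fun E ↦
    hδ.exists_finset_forall_eqOn_abs_sub_lt (φ E) (x E) (L + max K L) (half_pos hε)
  set E : ℕ → Finset M := fun n ↦ (fun A ↦ A ∪ D A)^[n] ∅
  have hE_succ : ∀ n, E (n + 1) = E n ∪ D (E n) := fun n ↦ Function.iterate_succ_apply' _ _ _
  have hE : Monotone E := monotone_nat_of_le_succ fun n ↦ hE_succ n ▸ Finset.subset_union_left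
  choose γ hγL hγ using fun n ↦
    hδ.exists_norm_le_apply_eq_sub_clamp (hφL (E n)) (hρK (E (n + 1))) (hρ0 _ o)
  have hdisj : ∀ z m n, m < n → γ n (δ z) ≠ 0 → γ m (δ z) = 0 := by
    intro z m n hmn hn
    have hφn : φ (E n) (δ z) ≠ 0 := fun h ↦ hn (by simp [hγ, h, clamp_eq_self, hρ0])
    rw [hγ, clamp_eq_self, sub_self]
    calc |φ (E m) (δ z)| ≤ b z := hφb _ z
      _ ≤ ρ (E n) z := le_of_not_gt fun h ↦ hφn (hφρ _ z h)
      _ ≤ ρ (E (m + 1)) z := hρ (hE hmn) z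
  have hwuc : IsWUC γ := hδ.isWUC_of_pairwise_disjoint_support hγL fun z m n hm hn ↦ by
    rcases lt_trichotomy m n with h | h | h
    · exact absurd (hdisj z m n h hn) hm
    · exact h
    · exact absurd (hdisj z n m h hm) hn
  have hγD : ∀ n, ∀ z ∈ D (E n), γ n (δ z) = φ (E n) (δ z) := fun n z hz ↦ by
    have hρz : ρ (E (n + 1)) z = 0 := hρE _ z (hE_succ n ▸ Finset.mem_union_right _ hz)
    rw [hγ, hρz, abs_nonpos_iff.1 (abs_clamp_le le_rfl _), sub_zero]
  obtain ⟨n, hn⟩ := (hΓ γ hwuc (ε / 2) (by positivity)).exists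
  have hlow := abs_sub_abs_le_abs_sub (φ (E n) (x (E n))) (γ n (x (E n)))
  linarith [hx (E n), hn _ (hxΓ (E n)), hD _ (γ n) (hγL n) (hγD n)]

theorem exists_pos_forall_eqOn_closedBall_abs_apply_le (hδ : IsLipschitzFree o δ) {Γ : Set F}
    (hΓ : IsVStarSet Γ) (L : ℝ≥0) {ε : ℝ} (hε : 0 < ε) :
    ∃ R > 0, ∀ φ : StrongDual ℝ F, ‖φ‖ ≤ L → (∀ x ∈ closedBall o R, φ (δ x) = 0) →
      ∀ x ∈ Γ, |φ x| ≤ ε := by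
  have hsum : ∀ E : Finset M, 0 ≤ ∑ p ∈ E, dist p o := fun E ↦ Finset.sum_nonneg fun _ _ ↦
    dist_nonneg
  obtain ⟨E, hE⟩ := hδ.exists_finset_forall_abs_apply_le hΓ (b := fun x ↦ L * dist x o)
    (K := 2 * L) (ρ := fun E x ↦ 2 * L * max (dist x o - ∑ p ∈ E, dist p o) 0)
    (fun E E' hEE' x ↦ by
      have := Finset.sum_le_sum_of_subset_of_nonneg (f := fun p ↦ dist p o) hEE' fun _ _ _ ↦
        dist_nonneg
      dsimp only
      gcongr)
    (fun E x ↦ by positivity)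
    (fun E ↦ by simpa using lipschitzWith_mul_max_dist_sub (2 * L) o (∑ p ∈ E, dist p o))
    (fun E x hx ↦ by
      have := Finset.single_le_sum (f := fun p ↦ dist p o) (fun _ _ ↦ dist_nonneg) hx
      rw [max_eq_right (by simpa using this), mul_zero])
    L hε
  refine ⟨2 * ∑ p ∈ E, dist p o + 1, by linarith [hsum E], fun φ hφ hφ0 ↦
    hE φ hφ (hδ.abs_apply_le hφ) fun x hx ↦ hφ0 x ?_⟩
  have hlt : 2 * L * (dist x o - ∑ p ∈ E, dist p o) < L * dist x o :=
    (mul_le_mul_of_nonneg_left (le_max_left _ _) (by positivity)).trans_lt hx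
  rw [mem_closedBall]
  nlinarith [L.coe_nonneg]

theorem exists_finset_forall_eqOn_thickening_abs_apply_le_of_bounded (hδ : IsLipschitzFree o δ)
    {Γ : Set F} (hΓ : IsVStarSet Γ) (L B : ℝ≥0) {d : ℝ≥0} (hd : 0 < d) {ε : ℝ} (hε : 0 < ε) :
    ∃ E : Finset M, o ∈ E ∧ ∀ φ : StrongDual ℝ F, ‖φ‖ ≤ L → (∀ x, |φ (δ x)| ≤ B) →
      (∀ x, infDist x E < d → φ (δ x) = 0) → ∀ x ∈ Γ, |φ x| ≤ ε := by
  classical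
  obtain ⟨E, hE⟩ := hδ.exists_finset_forall_abs_apply_le hΓ (b := fun _ ↦ B) (K := B / d)
    (ρ := fun E x ↦ B / d * infDist x (insert o E : Finset M))
    (fun E E' hEE' x ↦ by
      dsimp only
      gcongr
      exact infDist_le_infDist_of_subset (by simpa using Set.insert_subset_insert hEE') (by simp))
    (fun E x ↦ mul_nonneg (by positivity) infDist_nonneg)
    (fun E ↦ by simpa using lipschitzWith_const_mul (lipschitz_infDist_pt _) (B / d))
    (fun E x hx ↦ by simp [infDist_zero_of_mem, hx])
    L hε
  refine ⟨insert o E, Finset.mem_insert_self _ _, fun φ hφ hφB hφ0 ↦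
    hE φ hφ hφB fun x hx ↦ hφ0 x ?_⟩
  by_contra! hle
  refine hx.not_ge ?_
  rw [div_mul_eq_mul_div, le_div_iff₀ (by positivity)]
  gcongr

theorem exists_finset_forall_eqOn_thickening_abs_apply_le (hδ : IsLipschitzFree o δ)
    {Γ : Set F} (hΓ : IsVStarSet Γ) (L : ℝ≥0) {d : ℝ} (hd : 0 < d) {ε : ℝ} (hε : 0 < ε) :
    ∃ E : Finset M, o ∈ E ∧ ∀ φ : StrongDual ℝ F, ‖φ‖ ≤ L →
      (∀ x, infDist x E < d → φ (δ x) = 0) → ∀ x ∈ Γ, |φ x| ≤ ε := by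
  set C : ℝ≥0 := L + max (2 * L) L
  obtain ⟨R, hR, hfar⟩ := hδ.exists_pos_forall_eqOn_closedBall_abs_apply_le hΓ (L + C)
    (half_pos hε)
  lift R to ℝ≥0 using hR.le
  lift d to ℝ≥0 using hd.le
  obtain ⟨E, hoE, hE⟩ := hδ.exists_finset_forall_eqOn_thickening_abs_apply_le_of_bounded hΓ C
    (L * (2 * R)) hd (half_pos hε)
  refine ⟨E, hoE, fun φ hφ hφE x hx ↦ ?_⟩
  obtain ⟨γ, hγC, hγ⟩ := hδ.exists_norm_le_apply_eq_sub_clamp hφ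
    (r := fun x ↦ 2 * L * max (dist x o - R) 0) (K := 2 * L)
    (by simpa using lipschitzWith_mul_max_dist_sub (2 * L) o R) (by positivity)
  have hγφ : ∀ z, |γ (δ z)| ≤ |φ (δ z)| := fun z ↦ by
    rw [hγ]
    exact abs_sub_clamp_le (by positivity) _
  have hγB : ∀ z, |γ (δ z)| ≤ ↑(L * (2 * R)) := fun z ↦ by
    rcases le_total (dist z o) (2 * R) with hz | hz
    · refine (hγφ z).trans ((hδ.abs_apply_le hφ z).trans ?_)
      push_cast
      gcongr
    · rw [hγ, clamp_eq_self, sub_self, abs_zero]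
      · positivity
      · refine (hδ.abs_apply_le hφ z).trans ?_
        nlinarith [L.coe_nonneg, le_max_left (dist z o - R) 0,
          mul_le_mul_of_nonneg_left (le_max_left (dist z o - R) 0) L.coe_nonneg]
  have hγx : |γ x| ≤ ε / 2 := hE γ hγC hγB (fun z hz ↦ abs_nonpos_iff.1 <| by
    simpa [hφE z hz] using hγφ z) x hx
  have hφγx : |(φ - γ) x| ≤ ε / 2 := hfar (φ - γ)
    ((norm_sub_le _ _).trans (add_le_add hφ hγC)) (fun z hz ↦ by
      have hz0 : max (dist z o - R) 0 = 0 := max_eq_right (sub_nonpos.2 (mem_closedBall.1 hz))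
      simp [hγ, hz0, abs_nonpos_iff.1 (abs_clamp_le le_rfl _)]) x hx
  calc |φ x| = |(φ - γ) x + γ x| := by simp
    _ ≤ |(φ - γ) x| + |γ x| := abs_add_le _ _
    _ ≤ ε := by linarith

end IsLipschitzFree

section LocalLipschitz

variable {M : Type*} [PseudoMetricSpace M] {X : Type*} [SeminormedAddCommGroup X] [NormedSpace ℝ X]

/-- `g` has asymptotic (strict pointwise) Lipschitz constant at most `w z` at every point `z`:
the upper limit of `|g x - g y| / dist x y` as `(x, y) → (z, z)` is at most `w z`. -/
def HasLocalLipschitzBound (g w : M → ℝ) : Prop :=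
  ∀ z, ∀ K > w z, ∀ᶠ q : M × M in 𝓝 (z, z), |g q.1 - g q.2| ≤ K * dist q.1 q.2

namespace HasLocalLipschitzBound

theorem of_lipschitzWith {g : M → ℝ} {L : ℝ≥0} (hg : LipschitzWith L g) :
    HasLocalLipschitzBound g fun _ ↦ L := fun _ K hK ↦ .of_forall fun q ↦
  (hg.dist_le_mul q.1 q.2).trans (by gcongr)

theorem mono {f g v w : M → ℝ} (hf : HasLocalLipschitzBound f v)
    (hgf : ∀ x y, |g x - g y| ≤ |f x - f y|) (hvw : ∀ z, v z ≤ w z) :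
    HasLocalLipschitzBound g w := fun z K hK ↦
  (hf z K ((hvw z).trans_lt hK)).mono fun q hq ↦ (hgf q.1 q.2).trans hq

protected theorem continuous {g w : M → ℝ} (hg : HasLocalLipschitzBound g w) : Continuous g := by
  refine continuous_iff_continuousAt.2 fun z ↦ tendsto_iff_dist_tendsto_zero.2 ?_
  have hpair : Tendsto (fun x ↦ (x, z)) (𝓝 z) (𝓝 (z, z)) :=
    tendsto_id.prodMk_nhds tendsto_const_nhds
  have hlim : Tendsto (fun x ↦ (w z + 1) * dist x z) (𝓝 z) (𝓝 0) := by
    have : Continuous fun x ↦ (w z + 1) * dist x z := by fun_prop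
    simpa using this.tendsto z
  exact squeeze_zero' (.of_forall fun _ ↦ dist_nonneg)
    (hpair.eventually (hg z (w z + 1) (lt_add_one _))) hlim

theorem sum_const_mul {ι : Type*} {s : Finset ι} {c : ι → ℝ} {g w : ι → M → ℝ}
    (hg : ∀ i ∈ s, HasLocalLipschitzBound (g i) (w i)) (hc : ∀ i, |c i| ≤ 1) :
    HasLocalLipschitzBound (fun x ↦ ∑ i ∈ s, c i * g i x) fun x ↦ ∑ i ∈ s, w i x := by
  intro z K hK
  obtain ⟨η, hη, hηK⟩ : ∃ η > 0, ∑ i ∈ s, (w i z + η) ≤ K := by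
    refine ⟨(K - ∑ i ∈ s, w i z) / (s.card + 1), div_pos (sub_pos.2 hK) (by positivity), ?_⟩
    have : (s.card : ℝ) * ((K - ∑ i ∈ s, w i z) / (s.card + 1)) ≤ K - ∑ i ∈ s, w i z := by
      rw [mul_div_left_comm]
      exact mul_le_of_le_one_right (sub_pos.2 hK).le (div_le_one_of_le₀ (by simp) (by positivity))
    rw [Finset.sum_add_distrib, Finset.sum_const, nsmul_eq_mul]
    linarith
  have hev : ∀ᶠ q : M × M in 𝓝 (z, z),
      ∀ i ∈ s, |g i q.1 - g i q.2| ≤ (w i z + η) * dist q.1 q.2 :=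
    (eventually_all_finset s).2 fun i hi ↦ hg i hi z _ (lt_add_of_pos_right _ hη)
  filter_upwards [hev] with q hq
  calc |∑ i ∈ s, c i * g i q.1 - ∑ i ∈ s, c i * g i q.2|
      ≤ ∑ i ∈ s, |c i| * |g i q.1 - g i q.2| := by
        simp only [← Finset.sum_sub_distrib, ← mul_sub, ← abs_mul]
        exact Finset.abs_sum_le_sum_abs _ _
    _ ≤ ∑ i ∈ s, (w i z + η) * dist q.1 q.2 := Finset.sum_le_sum fun i hi ↦
        (mul_le_of_le_one_left (abs_nonneg _) (hc i)).trans (hq i hi)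
    _ ≤ K * dist q.1 q.2 := by
        rw [← Finset.sum_mul]
        gcongr

theorem mul {f h w : M → ℝ} {a : ℝ} {L : ℝ≥0} (hf : HasLocalLipschitzBound f w)
    (hfa : ∀ x, |f x| ≤ a) (hh : LipschitzWith L h) (hh0 : ∀ x, 0 ≤ h x) :
    HasLocalLipschitzBound (fun x ↦ f x * h x) fun x ↦ w x * h x + a * L := by
  intro z K hK
  obtain ⟨K₁, hK₁, hK₁K⟩ : ∃ K₁ > w z, K₁ * h z + a * L < K := by
    have hcont : Continuous fun t ↦ t * h z + a * L := by fun_prop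
    exact ((eventually_mem_nhdsWithin (s := Ioi (w z))).and <|
      ((hcont.tendsto (w z)).mono_left nhdsWithin_le_nhds).eventually_lt_const hK).exists
  have hev : ∀ᶠ q : M × M in 𝓝 (z, z), K₁ * h q.1 + a * L < K := by
    have hcont : Continuous fun q : M × M ↦ K₁ * h q.1 + a * L := by
      have := hh.continuous
      fun_prop
    exact (hcont.tendsto (z, z)).eventually_lt_const hK₁K
  filter_upwards [hf z K₁ hK₁, hev] with q hq hqK
  calc |f q.1 * h q.1 - f q.2 * h q.2|
      = |(f q.1 - f q.2) * h q.1 + f q.2 * (h q.1 - h q.2)| := by ring_nf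
    _ ≤ |f q.1 - f q.2| * h q.1 + |f q.2| * |h q.1 - h q.2| := by
        refine (abs_add_le _ _).trans_eq ?_
        rw [abs_mul, abs_mul, abs_of_nonneg (hh0 _)]
    _ ≤ K₁ * dist q.1 q.2 * h q.1 + a * (L * dist q.1 q.2) := by
        gcongr
        exacts [hh0 _, (abs_nonneg _).trans (hfa q.2), hfa _, hh.dist_le_mul _ _]
    _ = (K₁ * h q.1 + a * L) * dist q.1 q.2 := by ring
    _ ≤ K * dist q.1 q.2 := by gcongr

theorem abs_sub_le_integral {g w : X → ℝ} (hg : HasLocalLipschitzBound g w) (hw : Continuous w)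
    (p q : X) :
    |g p - g q| ≤ dist p q * ∫ t in (0 : ℝ)..1, w (AffineMap.lineMap q p t) := by
  let c : ℝ → X := AffineMap.lineMap q p
  have hc : Continuous c := AffineMap.lineMap_continuous
  have hg' := hg.continuous
  have hwc : Continuous fun t ↦ w (c t) := hw.comp hc
  have hslope : ∀ t ∈ Ico (0 : ℝ) 1, ∀ r, dist p q * w (c t) < r →
      ∃ᶠ z in 𝓝[>] t, slope (fun t ↦ |g (c t) - g q|) t z < r := by
    intro t _ r hr
    obtain ⟨K, hK, hKr⟩ : ∃ K > w (c t), dist p q * K < r := by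
      have hcont : Continuous fun K ↦ dist p q * K := by fun_prop
      exact ((eventually_mem_nhdsWithin (s := Ioi (w (c t)))).and <|
        ((hcont.tendsto (w (c t))).mono_left nhdsWithin_le_nhds).eventually_lt_const hr).exists
    have hpair : Tendsto (fun z ↦ (c z, c t)) (𝓝[>] t) (𝓝 (c t, c t)) :=
      ((hc.tendsto t).mono_left nhdsWithin_le_nhds).prodMk_nhds tendsto_const_nhds
    refine Eventually.frequently ?_
    filter_upwards [hpair.eventually (hg (c t) K hK), self_mem_nhdsWithin] with z hz hzt
    have hzt' : 0 < z - t := sub_pos.2 hzt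
    rw [slope_def_field, div_lt_iff₀ hzt']
    calc |g (c z) - g q| - |g (c t) - g q| ≤ |g (c z) - g (c t)| := by
          simpa using abs_sub_abs_le_abs_sub (g (c z) - g q) (g (c t) - g q)
      _ ≤ K * dist (c z) (c t) := hz
      _ = dist p q * K * (z - t) := by
          rw [dist_lineMap_lineMap, Real.dist_eq, abs_of_pos hzt', dist_comm q]
          ring
      _ < r * (z - t) := by gcongr
  have hle := image_le_of_liminf_slope_right_le_deriv_boundary
    (f := fun t ↦ |g (c t) - g q|) (B := fun t ↦ dist p q * ∫ s in (0 : ℝ)..t, w (c s))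
    (B' := fun t ↦ dist p q * w (c t)) (by fun_prop) (by simp [c])
    (continuous_const.mul <| intervalIntegral.continuous_primitive
      (fun _ _ ↦ hwc.intervalIntegrable _ _) 0).continuousOn
    (fun t _ ↦ ((hwc.integral_hasStrictDerivAt 0 t).hasDerivAt.const_mul _).hasDerivWithinAt)
    hslope (right_mem_Icc.2 zero_le_one)
  simpa [c] using hle

theorem lipschitzWith {g : X → ℝ} {L : ℝ≥0} (hg : HasLocalLipschitzBound g fun _ ↦ L) :
    LipschitzWith L g := LipschitzWith.of_dist_le_mul fun p q ↦ by
  simpa [mul_comm, Real.dist_eq] using hg.abs_sub_le_integral continuous_const p q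

end HasLocalLipschitzBound

end LocalLipschitz

section PointwiseClosure

theorem mem_closure_iff_forall_finset_exists_abs_sub_lt {α : Type*} {S : Set (α → ℝ)}
    {φ : α → ℝ} :
    φ ∈ closure S ↔ ∀ (D : Finset α), ∀ ε > 0, ∃ f ∈ S, ∀ p ∈ D, |f p - φ p| < ε := by
  have hbasis := hasBasis_pi fun i ↦ nhds_basis_ball (x := φ i)
  rw [← nhds_pi] at hbasis
  rw [mem_closure_iff_nhds_basis hbasis]
  constructor
  · intro h D ε hε
    simpa [Real.dist_eq] using h ⟨D, fun _ ↦ ε⟩ ⟨D.finite_toSet, fun _ _ ↦ hε⟩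
  · rintro h ⟨I, r⟩ ⟨hI, hr⟩
    obtain ⟨ε, hεr, hε⟩ : ∃ ε, (∀ i ∈ I, ε < r i) ∧ 0 < ε :=
      (((hI.eventually_all).2 fun i hi ↦ (gt_mem_nhds (hr i hi)).filter_mono
        nhdsWithin_le_nhds).and (eventually_mem_nhdsWithin (s := Ioi (0 : ℝ)))).exists
    obtain ⟨f, hf, hfφ⟩ := h hI.toFinset ε hε
    exact ⟨f, hf, fun i hi ↦ (hfφ i (hI.mem_toFinset.2 hi)).trans (hεr i hi)⟩

end PointwiseClosure

section DualNorm

theorem norm_le_of_forall_apply_le {E : Type*} [SeminormedAddCommGroup E] [NormedSpace ℝ E]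
    {φ : StrongDual ℝ E} {C : ℝ} (h : ∀ x, ‖x‖ ≤ 1 → φ x ≤ C) : ‖φ‖ ≤ C :=
  φ.opNorm_le_of_unit_norm (by simpa using h 0 (by simp)) fun x hx ↦
    abs_le'.2 ⟨h x hx.le, by simpa using h (-x) (by simp [hx])⟩

theorem mul_add_apply_add_mul_sub_apply_le {X : Type*} [SeminormedAddCommGroup X]
    [InnerProductSpace ℝ X] (a b : StrongDual ℝ X) (s t : ℝ) {x y : X} (hx : ‖x‖ ≤ 1)
    (hy : ‖y‖ ≤ 1) :
    s * (a + b) x + t * (a - b) y ≤ √(2 * (‖a‖ ^ 2 + ‖b‖ ^ 2)) * √(s ^ 2 + t ^ 2) := by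
  set u := s • x
  set v := t • y
  have hnorm (r : ℝ) {z : X} (hz : ‖z‖ ≤ 1) : ‖r • z‖ ^ 2 ≤ r ^ 2 := by
    rw [norm_smul, mul_pow, Real.norm_eq_abs, sq_abs]
    exact mul_le_of_le_one_right (sq_nonneg r) (pow_le_one₀ (norm_nonneg z) hz)
  have hpar : ‖u + v‖ ^ 2 + ‖u - v‖ ^ 2 ≤ 2 * (s ^ 2 + t ^ 2) := by
    have := parallelogram_law_with_norm ℝ u v
    linarith [hnorm s hx, hnorm t hy]
  calc s * (a + b) x + t * (a - b) y = a (u + v) + b (u - v) := by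
        simp only [u, v, add_apply, sub_apply, map_add, map_sub, map_smul, smul_eq_mul]
        ring
    _ ≤ ‖a‖ * ‖u + v‖ + ‖b‖ * ‖u - v‖ :=
        add_le_add ((le_abs_self _).trans (a.le_opNorm _)) ((le_abs_self _).trans (b.le_opNorm _))
    _ ≤ √(2 * (‖a‖ ^ 2 + ‖b‖ ^ 2) * (s ^ 2 + t ^ 2)) := by
        refine Real.le_sqrt_of_sq_le ?_
        nlinarith [sq_nonneg (‖a‖ * ‖u - v‖ - ‖b‖ * ‖u + v‖), sq_nonneg ‖a‖, sq_nonneg ‖b‖]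
    _ = √(2 * (‖a‖ ^ 2 + ‖b‖ ^ 2)) * √(s ^ 2 + t ^ 2) := Real.sqrt_mul (by positivity) _

/-- Proved by duality from the parallelogram law in `X`. -/
theorem norm_add_sq_add_norm_sub_sq_le {X : Type*} [SeminormedAddCommGroup X]
    [InnerProductSpace ℝ X] (a b : StrongDual ℝ X) :
    ‖a + b‖ ^ 2 + ‖a - b‖ ^ 2 ≤ 2 * (‖a‖ ^ 2 + ‖b‖ ^ 2) := by
  set s := ‖a + b‖
  set t := ‖a - b‖
  set R := √(2 * (‖a‖ ^ 2 + ‖b‖ ^ 2)) * √(s ^ 2 + t ^ 2)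
  have hs (y : X) (hy : ‖y‖ ≤ 1) : ‖s • (a + b)‖ ≤ R - t * (a - b) y :=
    norm_le_of_forall_apply_le fun x hx ↦
      le_sub_iff_add_le.2 (mul_add_apply_add_mul_sub_apply_le a b s t hx hy)
  have ht : ‖t • (a - b)‖ ≤ R - ‖s • (a + b)‖ :=
    norm_le_of_forall_apply_le fun y hy ↦ le_sub_comm.1 (hs y hy)
  rw [norm_smul, norm_smul, norm_norm, norm_norm, ← sq, ← sq] at ht
  have hR : √(s ^ 2 + t ^ 2) * √(s ^ 2 + t ^ 2) ≤ R := by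
    rw [Real.mul_self_sqrt (by positivity)]
    linarith
  rcases (Real.sqrt_nonneg (s ^ 2 + t ^ 2)).eq_or_lt with h0 | hpos
  · rw [eq_comm, Real.sqrt_eq_zero (by positivity)] at h0
    rw [h0]
    positivity
  · exact (Real.sqrt_le_sqrt_iff (by positivity)).1 (le_of_mul_le_mul_right hR hpos)

end DualNorm

section SmoothContraction

open MeasureTheory

/-- `f` is a differentiable contraction whose derivative is Lipschitz: the class of functions on
which the quadratic energy of the derivative is minimized. -/
structure IsSmoothContraction {E : Type*} [NormedAddCommGroup E] [NormedSpace ℝ E]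
    (f : E → ℝ) : Prop where
  differentiable : Differentiable ℝ f
  norm_fderiv_le_one : ∀ x, ‖fderiv ℝ f x‖ ≤ 1
  exists_lipschitzWith_fderiv : ∃ K : ℝ≥0, LipschitzWith K (fderiv ℝ f)

namespace IsSmoothContraction

variable {E G : Type*} [NormedAddCommGroup E] [NormedSpace ℝ E] [NormedAddCommGroup G]
  [NormedSpace ℝ G] {f g : E → ℝ}

theorem lipschitzWith (hf : IsSmoothContraction f) : LipschitzWith 1 f :=
  lipschitzWith_of_nnnorm_fderiv_le hf.differentiable hf.norm_fderiv_le_one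

theorem continuous_fderiv (hf : IsSmoothContraction f) : Continuous (fderiv ℝ f) :=
  let ⟨_, hK⟩ := hf.exists_lipschitzWith_fderiv
  hK.continuous

theorem hasLocalLipschitzBound (hf : IsSmoothContraction f) :
    HasLocalLipschitzBound f fun z ↦ ‖fderiv ℝ f z‖ := by
  intro z K hK
  lift K to ℝ≥0 using (norm_nonneg _).trans hK.le
  have hstrict := (contDiff_one_iff_fderiv.2 ⟨hf.differentiable, hf.continuous_fderiv⟩)
    |>.hasStrictFDerivAt one_ne_zero (x := z)
  obtain ⟨s, hs, hsK⟩ := hstrict.exists_lipschitzOnWith_of_nnnorm_lt K hK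
  filter_upwards [prod_mem_nhds hs hs] with q hq
  exact hsK.dist_le_mul _ hq.1 _ hq.2

theorem const_smul_add_const_smul (hf : IsSmoothContraction f) (hg : IsSmoothContraction g)
    {a b : ℝ} (hab : |a| + |b| ≤ 1) : IsSmoothContraction (a • f + b • g) := by
  have hderiv : fderiv ℝ (a • f + b • g) = fun x ↦ a • fderiv ℝ f x + b • fderiv ℝ g x := by
    ext1 x
    rw [fderiv_add ((hf.differentiable x).const_smul a) ((hg.differentiable x).const_smul b),
      fderiv_const_smul (hf.differentiable x), fderiv_const_smul (hg.differentiable x)]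
  refine ⟨(hf.differentiable.const_smul a).add (hg.differentiable.const_smul b), fun x ↦ ?_, ?_⟩
  · rw [hderiv]
    calc ‖a • fderiv ℝ f x + b • fderiv ℝ g x‖
        ≤ |a| * ‖fderiv ℝ f x‖ + |b| * ‖fderiv ℝ g x‖ := by
          simpa only [norm_smul, Real.norm_eq_abs] using
            norm_add_le (a • fderiv ℝ f x) (b • fderiv ℝ g x)
      _ ≤ |a| * 1 + |b| * 1 := by
          gcongr
          exacts [hf.norm_fderiv_le_one x, hg.norm_fderiv_le_one x]
      _ ≤ 1 := by simpa using hab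
  · obtain ⟨K, hK⟩ := hf.exists_lipschitzWith_fderiv
    obtain ⟨L, hL⟩ := hg.exists_lipschitzWith_fderiv
    rw [hderiv]
    exact ⟨_, ((lipschitzWith_smul a).comp hK).add ((lipschitzWith_smul b).comp hL)⟩

theorem sub_const (hf : IsSmoothContraction f) (c : ℝ) : IsSmoothContraction fun x ↦ f x - c := by
  have hderiv : fderiv ℝ (fun x ↦ f x - c) = fderiv ℝ f := by
    ext1 x
    rw [fderiv_sub_const]
  exact ⟨hf.differentiable.sub_const c, by simpa only [hderiv] using hf.norm_fderiv_le_one,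
    by simpa only [hderiv] using hf.exists_lipschitzWith_fderiv⟩

theorem comp_continuousLinearMap (hf : IsSmoothContraction f) {T : G →L[ℝ] E} (hT : ‖T‖ ≤ 1) :
    IsSmoothContraction (f ∘ T) := by
  have hderiv : fderiv ℝ (f ∘ T) = fun x ↦ (fderiv ℝ f (T x)).comp T := by
    ext1 x
    rw [fderiv_comp x (hf.differentiable _) T.differentiableAt, T.fderiv]
  refine ⟨hf.differentiable.comp T.differentiable, fun x ↦ ?_, ?_⟩
  · rw [hderiv]
    exact (ContinuousLinearMap.opNorm_comp_le _ _).trans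
      (mul_le_one₀ (hf.norm_fderiv_le_one _) (norm_nonneg _) hT)
  · obtain ⟨K, hK⟩ := hf.exists_lipschitzWith_fderiv
    rw [hderiv]
    exact ⟨_, ((ContinuousLinearMap.precomp ℝ T).lipschitz.comp hK).comp T.lipschitz⟩

end IsSmoothContraction

theorem lipschitzWith_convolution {G E₁ E₂ H : Type*} [SeminormedAddCommGroup G]
    [MeasurableSpace G] {μ : Measure G} [NormedAddCommGroup E₁] [NormedSpace ℝ E₁]
    [NormedAddCommGroup E₂] [NormedSpace ℝ E₂] [NormedAddCommGroup H] [NormedSpace ℝ H]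
    {B : E₁ →L[ℝ] E₂ →L[ℝ] H} {ψ : G → E₁} {φ : G → E₂} {C K : ℝ≥0}
    (hψ : Integrable ψ μ) (hψC : ‖B‖ * ∫ t, ‖ψ t‖ ∂μ ≤ C) (hφ : LipschitzWith K φ)
    (hex : ConvolutionExists ψ φ B μ) : LipschitzWith (C * K) (convolution ψ φ B μ) := by
  refine LipschitzWith.of_dist_le_mul fun x y ↦ ?_
  have hpt (t : G) : ‖B (ψ t) (φ (x - t)) - B (ψ t) (φ (y - t))‖ ≤
      ‖B‖ * (K * dist x y) * ‖ψ t‖ := by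
    rw [← map_sub]
    calc ‖B (ψ t) (φ (x - t) - φ (y - t))‖ ≤ ‖B‖ * ‖ψ t‖ * ‖φ (x - t) - φ (y - t)‖ :=
          B.le_opNorm₂ _ _
      _ ≤ ‖B‖ * ‖ψ t‖ * (K * dist x y) := by
          gcongr
          simpa [← dist_eq_norm] using hφ.dist_le_mul (x - t) (y - t)
      _ = ‖B‖ * (K * dist x y) * ‖ψ t‖ := by ring
  calc dist (convolution ψ φ B μ x) (convolution ψ φ B μ y)
      = ‖∫ t, (B (ψ t) (φ (x - t)) - B (ψ t) (φ (y - t))) ∂μ‖ := by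
        rw [integral_sub (hex x) (hex y), dist_eq_norm, convolution_def, convolution_def]
    _ ≤ ∫ t, ‖B‖ * (K * dist x y) * ‖ψ t‖ ∂μ :=
        norm_integral_le_of_norm_le (hψ.norm.const_mul _) (.of_forall hpt)
    _ = ‖B‖ * (∫ t, ‖ψ t‖ ∂μ) * (K * dist x y) := by
        rw [integral_const_mul]
        ring
    _ ≤ C * K * dist x y := by
        rw [mul_assoc (C : ℝ)]
        gcongr

theorem exists_isSmoothContraction_dist_le {E : Type*} [NormedAddCommGroup E] [NormedSpace ℝ E]
    [FiniteDimensional ℝ E] {φ : E → ℝ} (hφ : LipschitzWith 1 φ) {ε : ℝ} (hε : 0 < ε) :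
    ∃ f, IsSmoothContraction f ∧ ∀ x, dist (f x) (φ x) ≤ ε := by
  borelize E
  let μ : Measure E := Measure.addHaar
  let bump : ContDiffBump (0 : E) := ⟨ε / 2, ε, half_pos hε, half_lt_self hε⟩
  let ψ := bump.normed μ
  let B := ContinuousLinearMap.lsmul ℝ ℝ (E := ℝ)
  have hψ : ContDiff ℝ 1 ψ := bump.contDiff_normed
  have hψc : HasCompactSupport ψ := bump.hasCompactSupport_normed
  have hψ' : Continuous (fderiv ℝ ψ) := hψ.continuous_fderiv one_ne_zero
  have hφi : LocallyIntegrable φ μ := hφ.continuous.locallyIntegrable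
  have hfderiv := hψc.hasFDerivAt_convolution_left B hψ hφi
  have hlip : LipschitzWith (1 * 1) (convolution ψ φ B μ) := by
    refine lipschitzWith_convolution (hψ.continuous.integrable_of_hasCompactSupport hψc) ?_ hφ
      (hψc.convolutionExists_left B hψ.continuous hφi)
    have hint : ∫ t, ‖ψ t‖ ∂μ = 1 := by
      simp only [Real.norm_of_nonneg (bump.nonneg_normed _), ψ, bump.integral_normed]
    rw [hint, mul_one]
    exact ContinuousLinearMap.opNorm_lsmul_le
  refine ⟨convolution ψ φ B μ, ⟨fun x ↦ (hfderiv x).differentiableAt, fun x ↦ ?_, ?_⟩, fun x ↦ ?_⟩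
  · simpa using norm_fderiv_le_of_lipschitz ℝ (x₀ := x) hlip
  · rw [funext fun x ↦ (hfderiv x).fderiv]
    exact ⟨_, lipschitzWith_convolution
      (hψ'.integrable_of_hasCompactSupport (hψc.fderiv ℝ)) (Real.le_coe_toNNReal _) hφ
      ((hψc.fderiv ℝ).convolutionExists_left _ hψ' hφi)⟩
  · refine bump.dist_normed_convolution_le hφ.continuous.aestronglyMeasurable fun y hy ↦ ?_
    simpa using (hφ.dist_le_mul y x).trans (by simpa using (mem_ball.1 hy).le)

/-- The smooth contractions on `X` that vanish at the origin. -/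
def smoothContractions (X : Type*) [NormedAddCommGroup X] [NormedSpace ℝ X] : Set (X → ℝ) :=
  {f | IsSmoothContraction f ∧ f 0 = 0}

theorem mem_closure_smoothContractions {X : Type*} [NormedAddCommGroup X] [InnerProductSpace ℝ X]
    {φ : X → ℝ} (hφ : LipschitzWith 1 φ) (hφ0 : φ 0 = 0) :
    φ ∈ closure (smoothContractions X) := by
  refine mem_closure_iff_forall_finset_exists_abs_sub_lt.2 fun D ε hε ↦ ?_
  let V : Submodule ℝ X := Submodule.span ℝ D
  have hφV : LipschitzWith 1 fun v : V ↦ φ v := fun x y ↦ hφ x y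
  obtain ⟨f, hf, hfφ⟩ := exists_isSmoothContraction_dist_le hφV (div_pos hε three_pos)
  let P := V.orthogonalProjectionOnto
  refine ⟨fun x ↦ f (P x) - f 0,
    ⟨(hf.comp_continuousLinearMap V.orthogonalProjectionOnto_norm_le).sub_const _, by simp⟩,
    fun p hp ↦ ?_⟩
  have hpV : P p = ⟨p, Submodule.subset_span hp⟩ :=
    V.orthogonalProjectionOnto_mem_subspace_eq_self ⟨p, _⟩
  have h0 := abs_le.1 (hfφ 0)
  have hp := abs_le.1 (hfφ (P p))
  simp only [hpV, ZeroMemClass.coe_zero, hφ0] at h0 hp ⊢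
  exact abs_lt.2 ⟨by linarith, by linarith⟩

end SmoothContraction

section PositiveFunctionals

open scoped BoundedContinuousFunction

/-- `ν` is a positive functional of total mass at most `m` on the bounded continuous functions, a
finitely additive substitute for a measure: such functionals have weak-star cluster points without
any compactness or tightness of the underlying space. -/
structure IsPositiveOfMassLE {X : Type*} [TopologicalSpace X] (ν : StrongDual ℝ (X →ᵇ ℝ))
    (m : ℝ) : Prop where
  apply_nonneg : ∀ w, 0 ≤ w → 0 ≤ ν w
  apply_one_le : ν 1 ≤ m

namespace IsPositiveOfMassLE

variable {X : Type*} [TopologicalSpace X] {μ ν : StrongDual ℝ (X →ᵇ ℝ)} {m : ℝ}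

theorem mass_nonneg (hν : IsPositiveOfMassLE ν m) : 0 ≤ m :=
  (hν.apply_nonneg 1 fun _ ↦ zero_le_one).trans hν.apply_one_le

theorem apply_mono (hν : IsPositiveOfMassLE ν m) {v w : X →ᵇ ℝ} (hvw : v ≤ w) : ν v ≤ ν w := by
  simpa using hν.apply_nonneg (w - v) (sub_nonneg.2 hvw)

theorem norm_le (hν : IsPositiveOfMassLE ν m) : ‖ν‖ ≤ m := by
  refine norm_le_of_forall_apply_le fun w hw ↦ (hν.apply_mono fun x ↦ ?_).trans hν.apply_one_le
  exact (le_abs_self _).trans ((w.norm_coe_le_norm x).trans hw)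

theorem two_mul_mul_apply_le (hν : IsPositiveOfMassLE ν m) (w : X →ᵇ ℝ) (s : ℝ) :
    2 * s * ν w ≤ ν (w ^ 2) + s ^ 2 * m := by
  have hsq := hν.apply_nonneg ((w - s • 1) ^ 2) fun x ↦ sq_nonneg _
  have hexp : (w - s • (1 : X →ᵇ ℝ)) ^ 2 = w ^ 2 - (2 * s) • w + s ^ 2 • (1 : X →ᵇ ℝ) := by
    ext x
    change (w x - s * 1) ^ 2 = w x ^ 2 - 2 * s * w x + s ^ 2 * 1
    ring
  rw [hexp, map_add, map_sub, map_smul, map_smul, smul_eq_mul, smul_eq_mul] at hsq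
  have := mul_le_mul_of_nonneg_left hν.apply_one_le (sq_nonneg s)
  linarith

theorem smul_add_smul (hμ : IsPositiveOfMassLE μ m) (hν : IsPositiveOfMassLE ν m) {a b : ℝ}
    (ha : 0 ≤ a) (hb : 0 ≤ b) (hab : a + b = 1) : IsPositiveOfMassLE (a • μ + b • ν) m where
  apply_nonneg w hw :=
    add_nonneg (mul_nonneg ha (hμ.apply_nonneg w hw)) (mul_nonneg hb (hν.apply_nonneg w hw))
  apply_one_le := calc
    a * μ 1 + b * ν 1 ≤ a * m + b * m := by
      gcongr
      exacts [hμ.apply_one_le, hν.apply_one_le]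
    _ = m := by rw [← add_mul, hab, one_mul]

end IsPositiveOfMassLE

theorem exists_isPositiveOfMassLE_forall_frequently_lt {X : Type*} [TopologicalSpace X]
    {ν : ℕ → StrongDual ℝ (X →ᵇ ℝ)} {m : ℝ} (hν : ∀ k, IsPositiveOfMassLE (ν k) m) :
    ∃ μ, IsPositiveOfMassLE μ m ∧ ∀ w c, μ w < c → ∃ᶠ k in atTop, ν k w < c := by
  let νw : ℕ → WeakDual ℝ (X →ᵇ ℝ) := fun k ↦ StrongDual.toWeakDual (ν k)
  have hball (k : ℕ) : νw k ∈ WeakDual.toStrongDual ⁻¹' closedBall 0 m :=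
    (mem_closedBall_zero_iff (E := StrongDual ℝ (X →ᵇ ℝ))).2 (hν k).norm_le
  obtain ⟨μ, -, hμ⟩ := (WeakDual.isCompact_closedBall (0 : StrongDual ℝ (X →ᵇ ℝ)) m)
    |>.exists_mapClusterPt (f := atTop) (u := νw) (tendsto_principal.2 (.of_forall hball))
  have hfreq (w : X →ᵇ ℝ) (c : ℝ) (hc : μ w < c) : ∃ᶠ k in atTop, ν k w < c :=
    mapClusterPt_iff_frequently.1 hμ _
      ((WeakDual.eval_continuous w).tendsto μ (gt_mem_nhds hc))
  refine ⟨WeakDual.toStrongDual μ, ⟨fun w hw ↦ ?_, ?_⟩, hfreq⟩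
  · by_contra! hneg
    obtain ⟨k, hk⟩ := (hfreq w 0 hneg).exists
    exact hk.not_ge ((hν k).apply_nonneg w hw)
  · by_contra! hlt
    have hneg : μ (-1) < -m := by simpa using hlt
    obtain ⟨k, hk⟩ := (hfreq (-1) (-m) hneg).exists
    exact hk.not_ge (by simpa using (hν k).apply_one_le)

variable {X : Type*} [SeminormedAddCommGroup X] [NormedSpace ℝ X]

/-- The functional averaging over the segment from `q` to `p`. -/
def segmentMean (p q : X) : StrongDual ℝ (X →ᵇ ℝ) :=
  LinearMap.mkContinuous
    { toFun := fun w ↦ ∫ t in (0 : ℝ)..1, w (AffineMap.lineMap q p t)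
      map_add' := fun v w ↦ intervalIntegral.integral_add
        ((v.continuous.comp AffineMap.lineMap_continuous).intervalIntegrable _ _)
        ((w.continuous.comp AffineMap.lineMap_continuous).intervalIntegrable _ _)
      map_smul' := fun c w ↦ intervalIntegral.integral_const_mul c _ }
    1 fun w ↦ by
      simpa using intervalIntegral.norm_integral_le_of_norm_le_const (a := 0) (b := 1)
        fun t _ ↦ w.norm_coe_le_norm (AffineMap.lineMap q p t)

theorem segmentMean_apply (p q : X) (w : X →ᵇ ℝ) :
    segmentMean p q w = ∫ t in (0 : ℝ)..1, w (AffineMap.lineMap q p t) := rfl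

theorem isPositiveOfMassLE_smul_segmentMean {m : ℝ} (hm : 0 ≤ m) (p q : X) :
    IsPositiveOfMassLE (m • segmentMean p q) m where
  apply_nonneg w hw :=
    mul_nonneg hm (intervalIntegral.integral_nonneg zero_le_one fun _ _ ↦ hw _)
  apply_one_le := by simp [segmentMean_apply]

end PositiveFunctionals

section Domination

open scoped BoundedContinuousFunction

/-- The element `x` of the free space is dominated by `ν`: every functional is controlled at `x`
by the `ν`-average of its local Lipschitz constants. -/
def IsDominatedBy {M : Type*} [PseudoMetricSpace M] {F : Type*} [SeminormedAddCommGroup F]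
    [NormedSpace ℝ F] (δ : M → F) (ν : StrongDual ℝ (M →ᵇ ℝ)) (x : F) : Prop :=
  ∀ (φ : StrongDual ℝ F) (w : M →ᵇ ℝ), HasLocalLipschitzBound (φ ∘ δ) w → |φ x| ≤ ν w

/-- The finitely supported elements of the free space over `δ` that are dominated by a positive
functional of mass at most `m`. -/
def dominatedSet {M : Type*} [PseudoMetricSpace M] {F : Type*} [SeminormedAddCommGroup F]
    [NormedSpace ℝ F] (δ : M → F) (m : ℝ) : Set F :=
  {x | x ∈ Submodule.span ℝ (range δ) ∧ ∃ ν, IsPositiveOfMassLE ν m ∧ IsDominatedBy δ ν x}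

theorem convex_dominatedSet {M : Type*} [PseudoMetricSpace M] {F : Type*}
    [SeminormedAddCommGroup F] [NormedSpace ℝ F] (δ : M → F) (m : ℝ) :
    Convex ℝ (dominatedSet δ m) := by
  rintro x ⟨hx, μ, hμ, hμx⟩ y ⟨hy, ν, hν, hνy⟩ a b ha hb hab
  refine ⟨add_mem (Submodule.smul_mem _ a hx) (Submodule.smul_mem _ b hy), a • μ + b • ν,
    hμ.smul_add_smul hν ha hb hab, fun φ w hw ↦ ?_⟩
  calc |φ (a • x + b • y)| ≤ a * |φ x| + b * |φ y| := by
        rw [map_add, map_smul, map_smul, smul_eq_mul, smul_eq_mul]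
        refine (abs_add_le _ _).trans_eq ?_
        rw [abs_mul, abs_mul, abs_of_nonneg ha, abs_of_nonneg hb]
    _ ≤ a * μ w + b * ν w := by
        gcongr
        exacts [hμx φ w hw, hνy φ w hw]

variable {X : Type*} {F : Type*}

theorem molecule_mem_dominatedSet [NormedAddCommGroup X] [NormedSpace ℝ X]
    [SeminormedAddCommGroup F] [NormedSpace ℝ F] (δ : X → F) {m : ℝ} (hm : 0 ≤ m) {p q : X}
    (hpq : p ≠ q) : (m / dist p q) • (δ p - δ q) ∈ dominatedSet δ m := by
  refine ⟨Submodule.smul_mem _ _ (sub_mem (Submodule.subset_span (mem_range_self p))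
    (Submodule.subset_span (mem_range_self q))), _, isPositiveOfMassLE_smul_segmentMean hm p q,
    fun φ w hw ↦ ?_⟩
  calc |φ ((m / dist p q) • (δ p - δ q))| = m / dist p q * |φ (δ p) - φ (δ q)| := by
        rw [map_smul, map_sub, smul_eq_mul, abs_mul, abs_of_nonneg (by positivity)]
    _ ≤ m / dist p q * (dist p q * segmentMean p q w) := by
        gcongr
        exact hw.abs_sub_le_integral w.continuous p q
    _ = m * segmentMean p q w := by
        rw [← mul_assoc, div_mul_cancel₀ _ (dist_ne_zero.2 hpq)]

variable [NormedAddCommGroup X] [NormedSpace ℝ X] [NormedAddCommGroup F] [NormedSpace ℝ F]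
  {o : X} {δ : X → F}

theorem IsLipschitzFree.closedBall_subset_closure_dominatedSet (hδ : IsLipschitzFree o δ) {m : ℝ}
    (hm : 0 < m) : closedBall 0 m ⊆ closure (dominatedSet δ m) := by
  intro x hx
  by_contra hxA
  obtain ⟨φ, s, hφs, hsx⟩ :=
    geometric_hahn_banach_closed_point (convex_dominatedSet δ m).closure isClosed_closure hxA
  have hs : 0 < s := by
    have h0 : (0 : F) ∈ dominatedSet δ m :=
      ⟨zero_mem _, 0, ⟨fun _ _ ↦ le_rfl, hm.le⟩, fun φ w _ ↦ by simp⟩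
    simpa using hφs 0 (subset_closure h0)
  have hlip : LipschitzWith (s / m).toNNReal (φ ∘ δ) := by
    refine LipschitzWith.of_le_add_mul _ fun p q ↦ ?_
    rcases eq_or_ne p q with rfl | hpq
    · simp
    have hlt := hφs _ (subset_closure (molecule_mem_dominatedSet δ hm.le hpq))
    rw [map_smul, map_sub, smul_eq_mul, div_mul_eq_mul_div, div_lt_iff₀ (dist_pos.2 hpq),
      ← lt_div_iff₀' hm, mul_div_right_comm, sub_lt_iff_lt_add'] at hlt
    rw [Real.coe_toNNReal _ (by positivity)]
    exact hlt.le
  have hnorm : ‖φ‖ ≤ s / m := by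
    simpa [Real.coe_toNNReal _ (div_pos hs hm).le] using hδ.norm_le_of_lipschitzWith hlip
  refine hsx.not_ge ?_
  calc φ x ≤ ‖φ‖ * ‖x‖ := (le_abs_self _).trans (φ.le_opNorm x)
    _ ≤ s / m * m := by
        gcongr
        exact mem_closedBall_zero_iff.1 hx
    _ = s := div_mul_cancel₀ _ hm.ne'

end Domination

section NearMinimizers

variable {V : Type*} [AddCommGroup V] [Module ℝ V] [TopologicalSpace V] [IsTopologicalAddGroup V]
  [ContinuousConstSMul ℝ V] {S : Set V} {Q : V → ℝ}

theorem half_smul_sub_mem_closure_of_half_smul_add_notMem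
    (hmid : ∀ f ∈ S, ∀ g ∈ S, (1 / 2 : ℝ) • (f + g) ∈ S ∧ (1 / 2 : ℝ) • (f - g) ∈ S ∧
      Q ((1 / 2 : ℝ) • (f + g)) + Q ((1 / 2 : ℝ) • (f - g)) ≤ (Q f + Q g) / 2)
    {r t : ℝ} {u v : V} (hu : u ∈ closure {f ∈ S | Q f ≤ t}) (hv : v ∈ closure {f ∈ S | Q f ≤ t})
    (huv : (1 / 2 : ℝ) • (u + v) ∉ closure {f ∈ S | Q f ≤ r}) :
    (1 / 2 : ℝ) • (u - v) ∈ closure {f ∈ S | Q f ≤ t - r} := by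
  refine mem_closure_iff_nhds.2 fun O hO ↦ ?_
  have hsum : Tendsto (fun p : V × V ↦ (1 / 2 : ℝ) • (p.1 + p.2)) (𝓝 (u, v))
      (𝓝 ((1 / 2 : ℝ) • (u + v))) := Continuous.tendsto (by fun_prop) (u, v)
  have hdiff : Tendsto (fun p : V × V ↦ (1 / 2 : ℝ) • (p.1 - p.2)) (𝓝 (u, v))
      (𝓝 ((1 / 2 : ℝ) • (u - v))) := Continuous.tendsto (by fun_prop) (u, v)
  have hmem : (u, v) ∈ closure ({f ∈ S | Q f ≤ t} ×ˢ {f ∈ S | Q f ≤ t}) := by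
    rw [closure_prod_eq]
    exact ⟨hu, hv⟩
  obtain ⟨⟨f, g⟩, ⟨hfar, hO'⟩, ⟨hf, hft⟩, hg, hgt⟩ := mem_closure_iff_nhds.1 hmem _
    (inter_mem (hsum (isClosed_closure.isOpen_compl.mem_nhds huv)) (hdiff hO))
  obtain ⟨hsumS, hdiffS, hle⟩ := hmid f hf g hg
  have hlow : r < Q ((1 / 2 : ℝ) • (f + g)) := by
    by_contra! h
    exact hfar (subset_closure ⟨hsumS, h⟩)
  exact ⟨_, hO', hdiffS, by linarith⟩

theorem exists_forall_half_smul_sub_mem_closure {B : ℝ} (hQ0 : ∀ f ∈ S, 0 ≤ Q f)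
    (hQB : ∀ f ∈ S, Q f ≤ B)
    (hmid : ∀ f ∈ S, ∀ g ∈ S, (1 / 2 : ℝ) • (f + g) ∈ S ∧ (1 / 2 : ℝ) • (f - g) ∈ S ∧
      Q ((1 / 2 : ℝ) • (f + g)) + Q ((1 / 2 : ℝ) • (f - g)) ≤ (Q f + Q g) / 2)
    {C : ℕ → Set V} (hCanti : Antitone C) (hCconv : ∀ n, Convex ℝ (C n))
    (hCne : ∀ n, (C n).Nonempty) (hCS : ∀ n, C n ⊆ closure S) {η : ℝ} (hη : 0 < η) :
    ∃ u ∈ C 0, ∀ n, ∃ v ∈ C n, (1 / 2 : ℝ) • (u - v) ∈ closure {f ∈ S | Q f ≤ η} := by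
  let A : ℝ → Set V := fun t ↦ {f ∈ S | Q f ≤ t}
  let T : Set ℝ := {t | ∀ n, (C n ∩ closure (A t)).Nonempty}
  have hT : T.Nonempty := ⟨B, fun n ↦ (hCne n).mono fun c hc ↦
    ⟨hc, closure_mono (t := A B) (fun f hf ↦ ⟨hf, hQB f hf⟩) (hCS n hc)⟩⟩
  have hTbdd : BddBelow T := by
    refine ⟨0, fun t ht ↦ ?_⟩
    obtain ⟨f, hf, hft⟩ := closure_nonempty_iff.1 ((ht 0).mono inter_subset_right)
    exact (hQ0 f hf).trans hft
  obtain ⟨t, htT, ht⟩ := exists_lt_of_csInf_lt hT (lt_add_of_pos_right (sInf T) (half_pos hη))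
  obtain ⟨N, hN⟩ : ∃ N, C N ∩ closure (A (sInf T - η / 2)) = ∅ := by
    by_contra! h
    have := csInf_le hTbdd h
    linarith
  obtain ⟨u, huC, huA⟩ := htT N
  refine ⟨u, hCanti (Nat.zero_le N) huC, fun n ↦ ?_⟩
  obtain ⟨v, hvC, hvA⟩ := htT (max n N)
  have hmidC : (1 / 2 : ℝ) • (u + v) ∈ C N := by
    rw [smul_add]
    exact hCconv N huC (hCanti (le_max_right n N) hvC) (by norm_num) (by norm_num) (by norm_num)
  refine ⟨v, hCanti (le_max_left n N) hvC, closure_mono (s := A (t - (sInf T - η / 2))) ?_ <|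
    half_smul_sub_mem_closure_of_half_smul_add_notMem hmid huA hvA fun h ↦
      eq_empty_iff_forall_notMem.1 hN _ ⟨hmidC, h⟩⟩
  exact fun f hf ↦ ⟨hf.1, hf.2.trans (by linarith)⟩

end NearMinimizers

section Energy

open scoped BoundedContinuousFunction

variable {X : Type*} [NormedAddCommGroup X]

open scoped Classical in
/-- The function `z ↦ ‖f' z‖` as a bounded continuous function; the junk value is `0` when `f` is
not a smooth contraction. -/
def normDeriv [NormedSpace ℝ X] (f : X → ℝ) : X →ᵇ ℝ :=
  if hf : IsSmoothContraction f then
    .ofNormedAddCommGroup (fun z ↦ ‖fderiv ℝ f z‖) hf.continuous_fderiv.norm 1 fun z ↦ by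
      simpa using hf.norm_fderiv_le_one z
  else 0

theorem normDeriv_apply [NormedSpace ℝ X] {f : X → ℝ} (hf : IsSmoothContraction f) (z : X) :
    normDeriv f z = ‖fderiv ℝ f z‖ := by
  rw [normDeriv, dif_pos hf]
  rfl

theorem normDeriv_le_one [NormedSpace ℝ X] {f : X → ℝ} (hf : IsSmoothContraction f) :
    normDeriv f ≤ 1 := fun z ↦ by
  simpa [normDeriv_apply hf] using hf.norm_fderiv_le_one z

theorem normDeriv_nonneg [NormedSpace ℝ X] {f : X → ℝ} (hf : IsSmoothContraction f) :
    0 ≤ normDeriv f := fun z ↦ by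
  simp [normDeriv_apply hf]

/-- The Dirichlet energy of `f` with respect to `μ`, penalized by the values of `f` on `E`. -/
def penalizedEnergy [NormedSpace ℝ X] (μ : StrongDual ℝ (X →ᵇ ℝ)) (E : Finset X) (f : X → ℝ) : ℝ :=
  μ (normDeriv f ^ 2) + ∑ e ∈ E, f e ^ 2

variable {μ : StrongDual ℝ (X →ᵇ ℝ)} {m : ℝ}

theorem apply_normDeriv_sq_nonneg [NormedSpace ℝ X] (hμ : IsPositiveOfMassLE μ m) (f : X → ℝ) :
    0 ≤ μ (normDeriv f ^ 2) :=
  hμ.apply_nonneg _ fun _ ↦ sq_nonneg _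

theorem penalizedEnergy_nonneg [NormedSpace ℝ X] (hμ : IsPositiveOfMassLE μ m) (E : Finset X)
    (f : X → ℝ) : 0 ≤ penalizedEnergy μ E f :=
  add_nonneg (apply_normDeriv_sq_nonneg hμ f) (Finset.sum_nonneg fun _ _ ↦ sq_nonneg _)

theorem penalizedEnergy_le [NormedSpace ℝ X] (hμ : IsPositiveOfMassLE μ m) (E : Finset X)
    {f : X → ℝ} (hf : f ∈ smoothContractions X) :
    penalizedEnergy μ E f ≤ m + ∑ e ∈ E, ‖e‖ ^ 2 := by
  refine add_le_add ((hμ.apply_mono fun z ↦ ?_).trans hμ.apply_one_le)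
    (Finset.sum_le_sum fun e _ ↦ sq_le_sq.2 ?_)
  · exact pow_le_one₀ (normDeriv_nonneg hf.1 z) (normDeriv_le_one hf.1 z)
  · simpa [hf.2, Real.dist_eq] using hf.1.lipschitzWith.dist_le_mul e 0

theorem half_smul_add_mem_smoothContractions [NormedSpace ℝ X] {f g : X → ℝ}
    (hf : f ∈ smoothContractions X) (hg : g ∈ smoothContractions X) :
    (1 / 2 : ℝ) • (f + g) ∈ smoothContractions X := by
  refine ⟨?_, by simp [hf.2, hg.2]⟩
  rw [smul_add]
  exact hf.1.const_smul_add_const_smul hg.1 (by norm_num [abs_of_pos])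

theorem neg_mem_smoothContractions [NormedSpace ℝ X] {f : X → ℝ}
    (hf : f ∈ smoothContractions X) : -f ∈ smoothContractions X := by
  refine ⟨?_, by simp [hf.2]⟩
  simpa using hf.1.const_smul_add_const_smul hf.1 (a := -1) (b := 0) (by norm_num)

theorem half_smul_sub_mem_smoothContractions [NormedSpace ℝ X] {f g : X → ℝ}
    (hf : f ∈ smoothContractions X) (hg : g ∈ smoothContractions X) :
    (1 / 2 : ℝ) • (f - g) ∈ smoothContractions X := by
  rw [sub_eq_add_neg]
  exact half_smul_add_mem_smoothContractions hf (neg_mem_smoothContractions hg)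

theorem penalizedEnergy_half_smul_add_add_half_smul_sub_le [InnerProductSpace ℝ X]
    (hμ : IsPositiveOfMassLE μ m) (E : Finset X) {f g : X → ℝ} (hf : f ∈ smoothContractions X)
    (hg : g ∈ smoothContractions X) :
    penalizedEnergy μ E ((1 / 2 : ℝ) • (f + g)) + penalizedEnergy μ E ((1 / 2 : ℝ) • (f - g)) ≤
      (penalizedEnergy μ E f + penalizedEnergy μ E g) / 2 := by
  have hadd := half_smul_add_mem_smoothContractions hf hg
  have hsub := half_smul_sub_mem_smoothContractions hf hg
  have hderiv : normDeriv ((1 / 2 : ℝ) • (f + g)) ^ 2 + normDeriv ((1 / 2 : ℝ) • (f - g)) ^ 2 ≤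
      (1 / 2 : ℝ) • (normDeriv f ^ 2 + normDeriv g ^ 2) := by
    intro z
    have hfz := hf.1.differentiable z
    have hgz := hg.1.differentiable z
    have hpar := norm_add_sq_add_norm_sub_sq_le (fderiv ℝ f z) (fderiv ℝ g z)
    change normDeriv ((1 / 2 : ℝ) • (f + g)) z ^ 2 + normDeriv ((1 / 2 : ℝ) • (f - g)) z ^ 2 ≤
      1 / 2 * (normDeriv f z ^ 2 + normDeriv g z ^ 2)
    rw [normDeriv_apply hadd.1, normDeriv_apply hsub.1, normDeriv_apply hf.1, normDeriv_apply hg.1]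
    rw [fderiv_const_smul (hfz.add hgz), fderiv_const_smul (hfz.sub hgz), fderiv_add hfz hgz,
      fderiv_sub hfz hgz, norm_smul, norm_smul, mul_pow, mul_pow,
      Real.norm_of_nonneg one_half_pos.le]
    linarith
  have hμderiv := hμ.apply_mono hderiv
  rw [map_add, map_smul, map_add, smul_eq_mul] at hμderiv
  have hsum : ∑ e ∈ E, ((1 / 2 : ℝ) • (f + g)) e ^ 2 + ∑ e ∈ E, ((1 / 2 : ℝ) • (f - g)) e ^ 2 =
      (∑ e ∈ E, f e ^ 2 + ∑ e ∈ E, g e ^ 2) / 2 := by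
    rw [← Finset.sum_add_distrib, ← Finset.sum_add_distrib, Finset.sum_div]
    refine Finset.sum_congr rfl fun e _ ↦ ?_
    simp only [Pi.smul_apply, Pi.add_apply, Pi.sub_apply, smul_eq_mul]
    ring
  unfold penalizedEnergy
  linarith

theorem abs_apply_le_of_penalizedEnergy_le [NormedSpace ℝ X] (hμ : IsPositiveOfMassLE μ m)
    {E : Finset X} {f : X → ℝ} {d : ℝ} (hd : 0 ≤ d) (hf : penalizedEnergy μ E f ≤ d ^ 2) {e : X}
    (he : e ∈ E) : |f e| ≤ d := by
  refine abs_le_of_sq_le_sq ?_ hd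
  have hle := Finset.single_le_sum (f := fun e ↦ f e ^ 2) (fun _ _ ↦ sq_nonneg _) he
  have := apply_normDeriv_sq_nonneg hμ f
  unfold penalizedEnergy at hf
  linarith

theorem apply_normDeriv_lt_of_penalizedEnergy_le [NormedSpace ℝ X] (hμ : IsPositiveOfMassLE μ m)
    {E : Finset X} {f : X → ℝ} {ρ : ℝ} (hρ : 0 < ρ)
    (hf : penalizedEnergy μ E f ≤ ρ ^ 2 / (m + 1)) : μ (normDeriv f) < ρ := by
  have hm := hμ.mass_nonneg
  have hsq : μ (normDeriv f ^ 2) ≤ ρ ^ 2 / (m + 1) :=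
    (le_add_of_nonneg_right (Finset.sum_nonneg fun _ _ ↦ sq_nonneg _)).trans hf
  have hs : 0 < ρ / (m + 1) := by positivity
  refine lt_of_mul_lt_mul_left ?_ (mul_pos two_pos hs).le
  calc 2 * (ρ / (m + 1)) * μ (normDeriv f)
      ≤ μ (normDeriv f ^ 2) + (ρ / (m + 1)) ^ 2 * m := hμ.two_mul_mul_apply_le _ _
    _ ≤ ρ ^ 2 / (m + 1) + (ρ / (m + 1)) ^ 2 * m := by gcongr
    _ < ρ ^ 2 / (m + 1) + (ρ / (m + 1)) ^ 2 * (m + 1) := by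
        gcongr
        exact lt_add_one m
    _ = 2 * (ρ / (m + 1)) * ρ := by
        field_simp
        ring

end Energy

namespace IsJamesSequence

variable {F : Type*} [NormedAddCommGroup F] [NormedSpace ℝ F] {θ : ℝ} {φ : ℕ → StrongDual ℝ F}
  {x : ℕ → F} {U : StrongDual ℝ F} {n k : ℕ}

theorem norm_le_one_of_mem_convexHull (h : IsJamesSequence θ φ x)
    (hU : U ∈ convexHull ℝ (φ '' Ici n)) : ‖U‖ ≤ 1 :=
  mem_closedBall_zero_iff.1 <| convexHull_min
    (by rintro _ ⟨i, -, rfl⟩; exact mem_closedBall_zero_iff.2 (h.norm_le_one i))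
    (convex_closedBall _ _) hU

theorem eventually_le_apply_of_mem_convexHull (h : IsJamesSequence θ φ x)
    (hU : U ∈ convexHull ℝ (φ '' Ici n)) : ∀ᶠ k in atTop, θ ≤ U (x k) := by
  refine convexHull_min (t := {U : StrongDual ℝ F | ∀ᶠ k in atTop, θ ≤ U (x k)}) ?_ ?_ hU
  · rintro _ ⟨i, -, rfl⟩
    exact (eventually_ge_atTop i).mono (h.le_apply i)
  · intro U hU W hW a b ha hb hab
    filter_upwards [hU, hW] with k hUk hWk
    calc θ = a * θ + b * θ := by rw [← add_mul, hab, one_mul]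
      _ ≤ a * U (x k) + b * W (x k) := by gcongr

theorem apply_eq_zero_of_mem_convexHull (h : IsJamesSequence θ φ x)
    (hU : U ∈ convexHull ℝ (φ '' Ici n)) (hk : k < n) : U (x k) = 0 := by
  refine convexHull_min (t := {U : StrongDual ℝ F | U (x k) = 0}) ?_ ?_ hU
  · rintro _ ⟨i, hi, rfl⟩
    exact h.apply_eq_zero i k (hk.trans_le hi)
  · rintro U (hU : U (x k) = 0) W (hW : W (x k) = 0) a b - - -
    simp [hU, hW]

end IsJamesSequence

theorem sub_le_half_smul_sub_apply {E : Type*} [SeminormedAddCommGroup E] [NormedSpace ℝ E]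
    {U W : StrongDual ℝ E} {x y : E} {θ τ : ℝ} (hU : ‖U‖ ≤ 1) (hW : ‖W‖ ≤ 1) (hUx : θ ≤ U x)
    (hWx : W x = 0) (hxy : ‖x - y‖ ≤ τ) : θ / 2 - τ ≤ ((1 / 2 : ℝ) • (U - W)) y := by
  have hnorm : ‖(1 / 2 : ℝ) • (U - W)‖ ≤ 1 := by
    rw [norm_smul, Real.norm_of_nonneg (by norm_num)]
    linarith [norm_sub_le U W]
  have hx : θ / 2 ≤ ((1 / 2 : ℝ) • (U - W)) x := by
    rw [smul_apply, sub_apply, hWx, smul_eq_mul]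
    linarith
  have hle := (le_abs_self _).trans (((1 / 2 : ℝ) • (U - W)).le_of_opNorm_le hnorm (x - y))
  rw [map_sub] at hle
  linarith

theorem exists_continuous_apply_comp_eq {α F : Type*} [SeminormedAddCommGroup F]
    [NormedSpace ℝ F] {δ : α → F} {y : F} (hy : y ∈ Submodule.span ℝ (range δ)) :
    ∃ T : (α → ℝ) → ℝ, Continuous T ∧ ∀ φ : StrongDual ℝ F, T (φ ∘ δ) = φ y := by
  obtain ⟨c, rfl⟩ := Finsupp.mem_span_range_iff_exists_finsupp.1 hy
  exact ⟨fun f ↦ ∑ i ∈ c.support, c i * f i, by fun_prop, fun φ ↦ by simp [Finsupp.sum]⟩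

section FreeSpace

open scoped BoundedContinuousFunction

variable {X : Type*} [NormedAddCommGroup X] {F : Type*} [NormedAddCommGroup F] [NormedSpace ℝ F]
  {δ : X → F}

theorem IsLipschitzFree.eventually_forall_exists_penalizedEnergy_le [InnerProductSpace ℝ X]
    (hδ : IsLipschitzFree 0 δ) {θ τ : ℝ} {φ : ℕ → StrongDual ℝ F} {x : ℕ → F}
    (hφ : IsJamesSequence θ φ x) (hτ : 0 < τ) {μ : StrongDual ℝ (X →ᵇ ℝ)} {m : ℝ}
    (hμ : IsPositiveOfMassLE μ m) (E : Finset X) {η : ℝ} (hη : 0 < η) :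
    ∀ᶠ k in atTop, ∀ y ∈ Submodule.span ℝ (range δ), ‖x k - y‖ ≤ τ →
      ∃ ψ : StrongDual ℝ F, IsSmoothContraction (ψ ∘ δ) ∧ ‖ψ‖ ≤ 1 ∧
        penalizedEnergy μ E (ψ ∘ δ) ≤ η ∧ θ / 2 - 2 * τ ≤ ψ y := by
  let C : ℕ → Set (X → ℝ) := fun n ↦ (fun U : StrongDual ℝ F ↦ U ∘ δ) '' convexHull ℝ (φ '' Ici n)
  have hCS (n : ℕ) : C n ⊆ closure (smoothContractions X) := by
    rintro _ ⟨U, hU, rfl⟩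
    exact mem_closure_smoothContractions
      (hδ.lipschitzWith_apply (L := 1) (hφ.norm_le_one_of_mem_convexHull hU)) (hδ.apply_base U)
  obtain ⟨_, ⟨U, hU, rfl⟩, hfar⟩ := exists_forall_half_smul_sub_mem_closure (C := C)
    (fun f _ ↦ penalizedEnergy_nonneg hμ E f) (fun f hf ↦ penalizedEnergy_le hμ E hf)
    (fun f hf g hg ↦ ⟨half_smul_add_mem_smoothContractions hf hg,
      half_smul_sub_mem_smoothContractions hf hg,
      penalizedEnergy_half_smul_add_add_half_smul_sub_le hμ E hf hg⟩)
    (fun m n hmn ↦ image_mono (convexHull_mono (image_mono (Ici_subset_Ici.2 hmn))))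
    (fun n ↦ (convex_convexHull ℝ _).is_linear_image ⟨fun _ _ ↦ rfl, fun _ _ ↦ rfl⟩)
    (fun n ↦ ((nonempty_Ici.image φ).convexHull (𝕜 := ℝ)).image _) hCS hη
  filter_upwards [hφ.eventually_le_apply_of_mem_convexHull hU] with k hk y hy hxy
  obtain ⟨_, ⟨W, hW, rfl⟩, hUW⟩ := hfar (k + 1)
  have hWk : W (x k) = 0 := hφ.apply_eq_zero_of_mem_convexHull hW k.lt_succ_self
  let D : StrongDual ℝ F := (1 / 2 : ℝ) • (U - W)
  have hDy : θ / 2 - τ ≤ D y := sub_le_half_smul_sub_apply (hφ.norm_le_one_of_mem_convexHull hU)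
    (hφ.norm_le_one_of_mem_convexHull hW) hk hWk hxy
  obtain ⟨T, hT, hTy⟩ := exists_continuous_apply_comp_eq hy
  obtain ⟨f, hTf, hf, hfη⟩ := mem_closure_iff_nhds.1 hUW _ <|
    hT.continuousAt.preimage_mem_nhds (lt_mem_nhds (sub_lt_self (T (D ∘ δ)) hτ))
  obtain ⟨ψ, hψ, hψf⟩ := hδ.lift 1 f hf.1.lipschitzWith hf.2
  obtain rfl : ψ ∘ δ = f := funext hψf
  refine ⟨ψ, hf.1, hψ, hfη, ?_⟩
  rw [mem_preimage, mem_ofPred, hTy, hTy] at hTf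
  linarith

end FreeSpace

section Cutoff

open scoped BoundedContinuousFunction

/-- `h` is a cutoff function: a Lipschitz function with values in `[0, 1]`. -/
structure IsCutoff {M : Type*} [PseudoMetricSpace M] (h : M →ᵇ ℝ) : Prop where
  nonneg : 0 ≤ h
  le_one : h ≤ 1
  exists_lipschitzWith : ∃ L : ℝ≥0, LipschitzWith L h

theorem lipschitzWith_one_sub {M : Type*} [PseudoEMetricSpace M] {f : M → ℝ} {L : ℝ≥0}
    (hf : LipschitzWith L f) : LipschitzWith L fun x ↦ 1 - f x := by
  simpa using (LipschitzWith.const 1).sub hf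

theorem isCutoff_one {M : Type*} [PseudoMetricSpace M] : IsCutoff (1 : M →ᵇ ℝ) :=
  ⟨fun _ ↦ zero_le_one, le_rfl, 0, LipschitzWith.const 1⟩

theorem isCutoff_normDeriv {X : Type*} [NormedAddCommGroup X] [NormedSpace ℝ X] {f : X → ℝ}
    (hf : IsSmoothContraction f) : IsCutoff (normDeriv f) := by
  obtain ⟨K, hK⟩ := hf.exists_lipschitzWith_fderiv
  refine ⟨normDeriv_nonneg hf, normDeriv_le_one hf, 1 * K, ?_⟩
  rw [funext (normDeriv_apply hf)]
  exact lipschitzWith_one_norm.comp hK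

namespace IsCutoff

variable {M : Type*} [PseudoMetricSpace M] {g h : M →ᵇ ℝ}

theorem one_sub (hh : IsCutoff h) : IsCutoff (1 - h) where
  nonneg := sub_nonneg.2 hh.le_one
  le_one := sub_le_self _ hh.nonneg
  exists_lipschitzWith := hh.exists_lipschitzWith.imp fun _ ↦ lipschitzWith_one_sub

theorem mul (hg : IsCutoff g) (hh : IsCutoff h) : IsCutoff (g * h) := by
  obtain ⟨K, hK⟩ := hg.exists_lipschitzWith
  obtain ⟨L, hL⟩ := hh.exists_lipschitzWith
  refine ⟨fun z ↦ mul_nonneg (hg.nonneg z) (hh.nonneg z),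
    fun z ↦ mul_le_one₀ (hg.le_one z) (hh.nonneg z) (hh.le_one z), K + L,
    LipschitzWith.of_dist_le_mul fun x y ↦ ?_⟩
  have hx : 0 ≤ h x := hh.nonneg x
  have hy : 0 ≤ g y := hg.nonneg y
  calc |g x * h x - g y * h y| = |(g x - g y) * h x + g y * (h x - h y)| := by ring_nf
    _ ≤ |g x - g y| * h x + g y * |h x - h y| := by
        refine (abs_add_le _ _).trans_eq ?_
        rw [abs_mul, abs_mul, abs_of_nonneg hx, abs_of_nonneg hy]
    _ ≤ |g x - g y| + |h x - h y| := add_le_add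
        (mul_le_of_le_one_right (abs_nonneg _) (hh.le_one x))
        (mul_le_of_le_one_left (abs_nonneg _) (hg.le_one y))
    _ ≤ ↑(K + L) * dist x y := by
        push_cast
        rw [add_mul]
        exact add_le_add (hK.dist_le_mul x y) (hL.dist_le_mul x y)

end IsCutoff

theorem IsPositiveOfMassLE.apply_one_sub_mul_le {M : Type*} [PseudoMetricSpace M]
    {μ : StrongDual ℝ (M →ᵇ ℝ)} {m : ℝ} (hμ : IsPositiveOfMassLE μ m) {g h : M →ᵇ ℝ}
    (hg : g ≤ 1) (hh : h ≤ 1) : μ (1 - g * h) ≤ μ (1 - g) + μ (1 - h) := by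
  rw [← map_add]
  refine hμ.apply_mono fun z ↦ ?_
  have hgz : g z ≤ 1 := hg z
  have hhz : h z ≤ 1 := hh z
  change 1 - g z * h z ≤ 1 - g z + (1 - h z)
  nlinarith

theorem HasLocalLipschitzBound.clamp {M : Type*} [PseudoMetricSpace M] {f w : M → ℝ}
    (hf : HasLocalLipschitzBound f w) (a : ℝ) :
    HasLocalLipschitzBound (fun x ↦ clamp a (f x)) w := by
  refine hf.mono (fun x y ↦ ?_) fun _ ↦ le_rfl
  simpa [Real.dist_eq] using
    (lipschitzWith_clamp (LipschitzWith.const a) LipschitzWith.id).dist_le_mul (f x) (f y)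

theorem IsLipschitzFree.exists_norm_le_apply_eq_mul {X : Type*} [NormedAddCommGroup X]
    [NormedSpace ℝ X] {F : Type*} [NormedAddCommGroup F] [NormedSpace ℝ F] {o : X} {δ : X → F}
    (hδ : IsLipschitzFree o δ) {φ : StrongDual ℝ F} {w : X → ℝ}
    (hφ : HasLocalLipschitzBound (φ ∘ δ) w) (hw : ∀ z, w z ≤ 1) {a : ℝ}
    (hφa : ∀ z, |φ (δ z)| ≤ a) {h : X →ᵇ ℝ} (hh : IsCutoff h) {L : ℝ≥0} (hL : LipschitzWith L h)
    {ε : ℝ≥0} (haL : a * L ≤ ε) :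
    ∃ γ : StrongDual ℝ F, ‖γ‖ ≤ ↑(1 + ε) ∧ (∀ z, γ (δ z) = φ (δ z) * h z) ∧
      HasLocalLipschitzBound (γ ∘ δ) fun z ↦ w z * h z + ε := by
  have hloc : HasLocalLipschitzBound (fun z ↦ φ (δ z) * h z) fun z ↦ w z * h z + ε :=
    (hφ.mul hφa hL hh.nonneg).mono (fun _ _ ↦ le_rfl) fun z ↦ by gcongr
  have hlip : LipschitzWith (1 + ε) fun z ↦ φ (δ z) * h z :=
    (hloc.mono (fun _ _ ↦ le_rfl) fun z ↦ by
      push_cast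
      gcongr
      exact (mul_le_of_le_one_left (hh.nonneg z) (hw z)).trans (hh.le_one z)).lipschitzWith
  obtain ⟨γ, hγ, hγφ⟩ := hδ.lift _ _ hlip (by rw [hδ.apply_base, zero_mul])
  exact ⟨γ, hγ, hγφ, by rwa [(funext hγφ : γ ∘ δ = _)]⟩

theorem IsDominatedBy.abs_sub_apply_le {M : Type*} [PseudoMetricSpace M] {F : Type*}
    [SeminormedAddCommGroup F] [NormedSpace ℝ F] {δ : M → F} {ν : StrongDual ℝ (M →ᵇ ℝ)} {m : ℝ}
    {y : F} (hy : IsDominatedBy δ ν y) (hν : IsPositiveOfMassLE ν m) {h : M →ᵇ ℝ}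
    (hh : IsCutoff h) {L : ℝ≥0} (hL : LipschitzWith L h) {φ γ : StrongDual ℝ F}
    (hφ : LipschitzWith 1 (φ ∘ δ)) {a : ℝ} (hφa : ∀ z, |φ (δ z)| ≤ a)
    (hγ : ∀ z, γ (δ z) = φ (δ z) * h z) {ε : ℝ≥0} (haL : a * L ≤ ε) :
    |(φ - γ) y| ≤ ν (1 - h) + ε * m := by
  have hloc : HasLocalLipschitzBound ((φ - γ) ∘ δ) ((1 - h) + (ε : ℝ) • 1 : M →ᵇ ℝ) := by
    refine ((HasLocalLipschitzBound.of_lipschitzWith hφ).mul hφa (lipschitzWith_one_sub hL)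
      hh.one_sub.nonneg).mono (fun x y ↦ ?_) fun z ↦ ?_
    · simp [hγ, mul_sub]
    · simpa using haL
  refine (hy _ _ hloc).trans ?_
  rw [map_add, map_smul, smul_eq_mul]
  gcongr
  exact hν.apply_one_le

theorem IsLipschitzFree.exists_apply_eq_clamp_forall_isDominatedBy {X : Type*}
    [NormedAddCommGroup X] [NormedSpace ℝ X] {F : Type*} [NormedAddCommGroup F] [NormedSpace ℝ F]
    {o : X} {δ : X → F} (hδ : IsLipschitzFree o δ) {ψ : StrongDual ℝ F}
    (hψ : IsSmoothContraction (ψ ∘ δ)) (hψ1 : ‖ψ‖ ≤ 1) {h : X →ᵇ ℝ} (hh : IsCutoff h) {L : ℝ≥0}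
    (hL : LipschitzWith L h) {a : ℝ} (ha : 0 ≤ a) {ε : ℝ≥0} (haL : a * L ≤ ε) :
    ∃ φ γ : StrongDual ℝ F, ‖φ‖ ≤ 1 ∧ ‖γ‖ ≤ ↑(1 + ε) ∧
      (∀ z, φ (δ z) = clamp a (ψ (δ z))) ∧
      HasLocalLipschitzBound (γ ∘ δ) (fun z ↦ normDeriv (ψ ∘ δ) z * h z + ε) ∧
      ∀ y ν m, IsPositiveOfMassLE ν m → IsDominatedBy δ ν y → |(φ - γ) y| ≤ ν (1 - h) + ε * m := by
  obtain ⟨φ, hφ1, hφ⟩ := hδ.exists_norm_le_apply_eq_clamp (L := 1) hψ1 (LipschitzWith.const a) ha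
  rw [max_eq_right zero_le_one] at hφ1
  have hφloc : HasLocalLipschitzBound (φ ∘ δ) (normDeriv (ψ ∘ δ)) := by
    rw [funext (normDeriv_apply hψ), (funext hφ : φ ∘ δ = _)]
    exact hψ.hasLocalLipschitzBound.clamp a
  have hφa (z : X) : |φ (δ z)| ≤ a := by
    rw [hφ]
    exact abs_clamp_le ha _
  obtain ⟨γ, hγ, hγφ, hγloc⟩ :=
    hδ.exists_norm_le_apply_eq_mul hφloc (normDeriv_le_one hψ) hφa hh hL haL
  exact ⟨φ, γ, hφ1, hγ, hφ, hγloc, fun y ν m hν hy ↦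
    hy.abs_sub_apply_le hν hh hL (hδ.lipschitzWith_apply hφ1) hφa hγφ haL⟩

end Cutoff

theorem clamp_apply_eq_self_of_infDist_lt {M : Type*} [PseudoMetricSpace M] {f : M → ℝ}
    (hf : LipschitzWith 1 f) {E : Set M} (hE : E.Nonempty) {d : ℝ} (hd : ∀ e ∈ E, |f e| ≤ d)
    {z : M} (hz : infDist z E < d) : clamp (2 * d) (f z) = f z := by
  obtain ⟨e, he, hze⟩ := (infDist_lt_iff hE).1 hz
  refine clamp_eq_self ?_
  have hfz : |f z - f e| ≤ dist z e := by simpa [Real.dist_eq] using hf.dist_le_mul z e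
  linarith [abs_sub_abs_le_abs_sub (f z) (f e), hd e he]

theorem IsLipschitzFree.exists_finset_forall_abs_sub_apply_le_of_apply_eq_clamp {M : Type*}
    [MetricSpace M] {F : Type*} [NormedAddCommGroup F] [NormedSpace ℝ F] {o : M} {δ : M → F}
    (hδ : IsLipschitzFree o δ) {Γ : Set F} (hΓ : IsVStarSet Γ) {d τ : ℝ} (hd : 0 < d)
    (hτ : 0 < τ) :
    ∃ E : Finset M, ∀ ψ φ : StrongDual ℝ F, ‖ψ‖ ≤ 1 → ‖φ‖ ≤ 1 → (∀ e ∈ E, |ψ (δ e)| ≤ d) →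
      (∀ z, φ (δ z) = clamp (2 * d) (ψ (δ z))) → ∀ x ∈ Γ, |(ψ - φ) x| ≤ τ := by
  obtain ⟨E, hoE, hE⟩ := hδ.exists_finset_forall_eqOn_thickening_abs_apply_le hΓ 2 hd hτ
  refine ⟨E, fun ψ φ hψ hφ hψE hφψ ↦ hE _ ?_ fun z hz ↦ ?_⟩
  · refine (norm_sub_le _ _).trans ((add_le_add hψ hφ).trans_eq ?_)
    norm_num
  · rw [sub_apply, hφψ, sub_eq_zero, eq_comm]
    exact clamp_apply_eq_self_of_infDist_lt (hδ.lipschitzWith_apply hψ) ⟨o, hoE⟩ hψE hz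

section Telescoping

open scoped BoundedContinuousFunction

variable {X : Type*} [NormedAddCommGroup X] [NormedSpace ℝ X] {F : Type*} [NormedAddCommGroup F]
  [NormedSpace ℝ F] {o : X} {δ : X → F}

theorem IsLipschitzFree.isWUC_of_sum_le (hδ : IsLipschitzFree o δ) {γ : ℕ → StrongDual ℝ F}
    {w : ℕ → X → ℝ} (hγ : ∀ n, HasLocalLipschitzBound (γ n ∘ δ) (w n)) {L : ℝ≥0}
    (hw : ∀ s z, ∑ n ∈ s, w n z ≤ L) : IsWUC γ :=
  hδ.isWUC_of_lipschitzWith_sum (L := L) fun s _ hc ↦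
    ((HasLocalLipschitzBound.sum_const_mul (fun n _ ↦ hγ n) hc).mono (fun _ _ ↦ le_rfl)
      fun z ↦ hw s z).lipschitzWith

theorem sum_sub_succ_add_le {h ε : ℕ → ℝ} (h0 : h 0 ≤ 1) (hnonneg : ∀ n, 0 ≤ h n)
    (hanti : Antitone h) (hε0 : ∀ n, 0 ≤ ε n) (hε : Summable ε) (s : Finset ℕ) :
    ∑ n ∈ s, (h n - h (n + 1) + ε n) ≤ 1 + ∑' n, ε n := by
  obtain ⟨N, hN⟩ := s.exists_nat_subset_range
  rw [Finset.sum_add_distrib]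
  refine add_le_add ?_ (hε.sum_le_tsum s fun n _ ↦ hε0 n)
  calc ∑ n ∈ s, (h n - h (n + 1)) ≤ ∑ n ∈ Finset.range N, (h n - h (n + 1)) :=
        Finset.sum_le_sum_of_subset_of_nonneg hN fun n _ _ ↦ sub_nonneg.2 (hanti n.le_succ)
    _ = h 0 - h N := Finset.sum_range_sub' h N
    _ ≤ 1 := by linarith [hnonneg N]

end Telescoping

section Iteration

open scoped BoundedContinuousFunction

/-- Up to an error `τ`, infinitely many terms of `x` are finitely supported elements of the free
space over `δ` dominated by positive functionals of mass at most `m`, and `μ` is a weak-star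
cluster point of these functionals. -/
structure IsFrequentlyDominated {M : Type*} [PseudoMetricSpace M] {F : Type*}
    [SeminormedAddCommGroup F] [NormedSpace ℝ F] (δ : M → F) (τ m : ℝ)
    (μ : StrongDual ℝ (M →ᵇ ℝ)) (x : ℕ → F) : Prop where
  isPositiveOfMassLE : IsPositiveOfMassLE μ m
  frequently : ∀ w c, μ w < c → ∃ᶠ k in atTop, ∃ y ∈ Submodule.span ℝ (range δ), ‖x k - y‖ ≤ τ ∧
    ∃ ν, IsPositiveOfMassLE ν m ∧ IsDominatedBy δ ν y ∧ ν w < c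

theorem exists_isFrequentlyDominated {M : Type*} [PseudoMetricSpace M] {F : Type*}
    [SeminormedAddCommGroup F] [NormedSpace ℝ F] {δ : M → F} {τ m : ℝ} (hτ : 0 < τ) {x : ℕ → F}
    (hx : ∀ k, x k ∈ closure (dominatedSet δ m)) : ∃ μ, IsFrequentlyDominated δ τ m μ x := by
  have hnear (k : ℕ) : ∃ y ∈ dominatedSet δ m, dist (x k) y < τ := mem_closure_iff.1 (hx k) τ hτ
  choose y hy hxy using hnear
  choose hyspan ν hν hyν using hy
  obtain ⟨μ, hμ, hfreq⟩ := exists_isPositiveOfMassLE_forall_frequently_lt hν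
  exact ⟨μ, hμ, fun w c hwc ↦ (hfreq w c hwc).mono fun k hk ↦
    ⟨y k, hyspan k, by simpa [dist_eq_norm] using (hxy k).le, ν k, hν k, hyν k, hk⟩⟩

variable {X : Type*} [NormedAddCommGroup X] [InnerProductSpace ℝ X] {F : Type*}
  [NormedAddCommGroup F] [NormedSpace ℝ F] {δ : X → F} {Γ : Set F} {τ m : ℝ}
  {μ : StrongDual ℝ (X →ᵇ ℝ)} {θ : ℝ} {φ : ℕ → StrongDual ℝ F} {x : ℕ → F}

theorem le_apply_of_norm_sub_le {E : Type*} [SeminormedAddCommGroup E] [NormedSpace ℝ E] {x y : E}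
    {ψ φ γ : StrongDual ℝ E} {τ c : ℝ} (hxy : ‖x - y‖ ≤ τ) (hψ : ‖ψ‖ ≤ 1) (hφ : ‖φ‖ ≤ 1)
    (hγ : ‖γ‖ ≤ 2) (hψφ : |(ψ - φ) x| ≤ τ) (hφγ : |(φ - γ) y| ≤ 2 * τ) (hψy : c ≤ ψ y) :
    c - 7 * τ ≤ γ x := by
  have hclose {χ : StrongDual ℝ E} {C : ℝ} (hχ : ‖χ‖ ≤ C) : |χ x - χ y| ≤ C * τ := by
    rw [← map_sub]
    exact χ.le_of_opNorm_le_of_le hχ hxy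
  rw [sub_apply] at hψφ hφγ
  linarith [abs_le.1 (hclose hψ), abs_le.1 (hclose hφ), abs_le.1 (hclose hγ), abs_le.1 hψφ,
    abs_le.1 hφγ]

/-- The new cutoff is `h * (1 - ‖f'‖)` for some `f` of small energy: its decrease `h * ‖f'‖` pays
for the local Lipschitz constant of `γ`, which is `h` times a truncation of `f`. -/
theorem IsLipschitzFree.exists_isCutoff_le_exists_le_apply (hδ : IsLipschitzFree 0 δ)
    (hΓ : IsVStarSet Γ) (hxΓ : ∀ k, x k ∈ Γ) (hφ : IsJamesSequence θ φ x) (hτ : 0 < τ)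
    (hθ : 36 * τ ≤ θ) (hμ : IsFrequentlyDominated δ τ m μ x) {ε : ℝ≥0} (hε : 0 < ε)
    (hε1 : ε ≤ 1) (hεm : ε * m ≤ τ) {h : X →ᵇ ℝ} (hh : IsCutoff h) (hhμ : μ (1 - h) < τ) :
    ∃ h', IsCutoff h' ∧ μ (1 - h') < τ ∧ h' ≤ h ∧ ∃ γ : StrongDual ℝ F,
      HasLocalLipschitzBound (γ ∘ δ) (fun z ↦ h z - h' z + ε) ∧ ∃ z ∈ Γ, 9 * τ ≤ γ z := by
  obtain ⟨L, hL⟩ := hh.exists_lipschitzWith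
  obtain ⟨d, hd, hdL⟩ : ∃ d > 0, 2 * d * (L : ℝ) ≤ ε := by
    refine ⟨ε / (2 * (L + 1)), by positivity, ?_⟩
    calc 2 * (ε / (2 * (L + 1))) * (L : ℝ) = ε * (L / (L + 1)) := by field_simp
      _ ≤ ε := mul_le_of_le_one_right ε.2 ((div_le_one₀ (by positivity)).2 (by simp))
  have hm := hμ.isPositiveOfMassLE.mass_nonneg
  have hρ : 0 < τ - μ (1 - h) := sub_pos.2 hhμ
  obtain ⟨E, htight⟩ :=
    hδ.exists_finset_forall_abs_sub_apply_le_of_apply_eq_clamp hΓ hd hτ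
  obtain ⟨k, ⟨y, hy, hxy, ν, hν, hyν, hνh⟩, hk⟩ := ((hμ.frequently (1 - h) τ hhμ).and_eventually <|
    hδ.eventually_forall_exists_penalizedEnergy_le hφ hτ hμ.isPositiveOfMassLE E
      (η := min (d ^ 2) ((τ - μ (1 - h)) ^ 2 / (m + 1))) (by positivity)).exists
  obtain ⟨ψ, hψ, hψ1, hψη, hψy⟩ := hk y hy hxy
  obtain ⟨φ', γ, hφ'1, hγ, hφ'ψ, hγloc, hφ'γ⟩ :=
    hδ.exists_apply_eq_clamp_forall_isDominatedBy hψ hψ1 hh hL (by positivity) hdL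
  have hderiv : μ (normDeriv (ψ ∘ δ)) < τ - μ (1 - h) :=
    apply_normDeriv_lt_of_penalizedEnergy_le hμ.isPositiveOfMassLE hρ
      (hψη.trans (min_le_right _ _))
  have hψφ' : |(ψ - φ') (x k)| ≤ τ := htight ψ φ' hψ1 hφ'1
    (fun e he ↦ abs_apply_le_of_penalizedEnergy_le hμ.isPositiveOfMassLE hd.le
      (hψη.trans (min_le_left _ _)) he) hφ'ψ _ (hxΓ k)
  refine ⟨h * (1 - normDeriv (ψ ∘ δ)), hh.mul (isCutoff_normDeriv hψ).one_sub, ?_, ?_, γ, ?_, x k,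
    hxΓ k, ?_⟩
  · have := hμ.isPositiveOfMassLE.apply_one_sub_mul_le hh.le_one
      (isCutoff_normDeriv hψ).one_sub.le_one
    rw [sub_sub_cancel] at this
    linarith
  · exact fun z ↦ mul_le_of_le_one_right (hh.nonneg z) ((isCutoff_normDeriv hψ).one_sub.le_one z)
  · refine hγloc.mono (fun _ _ ↦ le_rfl) fun z ↦ le_of_eq ?_
    change normDeriv (ψ ∘ δ) z * h z + ε = h z - h z * (1 - normDeriv (ψ ∘ δ) z) + ε
    ring
  · have hγ2 : ‖γ‖ ≤ 2 := hγ.trans (by exact_mod_cast add_le_add_right hε1 1)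
    have := le_apply_of_norm_sub_le hxy hψ1 hφ'1 hγ2 hψφ'
      ((hφ'γ y ν m hν hyν).trans (by linarith)) hψy
    -- `16 τ ≤ θ / 2 - 2 τ ≤ ψ y`, and passing from `ψ y` to `γ (x k)` loses `7 τ`
    linarith

theorem exists_seq_of_forall_exists {α β : Type*} [Nonempty β] {P : α → Prop}
    {R : ℕ → α → α → β → Prop} {a₀ : α} (h₀ : P a₀)
    (h : ∀ n a, P a → ∃ a', P a' ∧ ∃ b, R n a a' b) :
    ∃ (a : ℕ → α) (b : ℕ → β), a 0 = a₀ ∧ ∀ n, P (a n) ∧ R n (a n) (a (n + 1)) (b n) := by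
  choose! next hP b hR using h
  let a : ℕ → α := Nat.rec a₀ next
  have ha (n : ℕ) : P (a n) := n.rec h₀ fun n hn ↦ hP n _ hn
  exact ⟨a, fun n ↦ b n (a n), rfl, fun n ↦ ⟨ha n, hR n _ (ha n)⟩⟩

theorem IsLipschitzFree.exists_isWUC_forall_exists_le_apply (hδ : IsLipschitzFree 0 δ)
    (hΓ : IsVStarSet Γ) (hxΓ : ∀ k, x k ∈ Γ) (hφ : IsJamesSequence θ φ x) (hτ : 0 < τ)
    (hθ : 36 * τ ≤ θ) (hμ : IsFrequentlyDominated δ τ m μ x) :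
    ∃ γ : ℕ → StrongDual ℝ F, IsWUC γ ∧ ∀ n, ∃ z ∈ Γ, 9 * τ ≤ γ n z := by
  obtain ⟨ε₀, hε₀, hε₀1, hε₀m⟩ : ∃ ε₀ : ℝ≥0, 0 < ε₀ ∧ ε₀ ≤ 1 ∧ ε₀ * m ≤ τ := by
    lift m to ℝ≥0 using hμ.isPositiveOfMassLE.mass_nonneg
    lift τ to ℝ≥0 using hτ.le
    have hτ' : 0 < τ := hτ
    refine ⟨τ / (τ + m), by positivity, div_le_one_of_le₀ (by simp) (by simp), ?_⟩
    norm_cast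
    rw [div_mul_eq_mul_div, mul_div_assoc]
    exact mul_le_of_le_one_right' (div_le_one_of_le₀ (by simp) (by simp))
  obtain ⟨ε, hε, _, hεsum, hlt⟩ := NNReal.exists_pos_sum_of_countable hε₀.ne' ℕ
  have hεε₀ (n : ℕ) : ε n ≤ ε₀ := (le_hasSum hεsum n fun _ _ ↦ zero_le).trans hlt.le
  have hm := hμ.isPositiveOfMassLE.mass_nonneg
  obtain ⟨h, γ, h0, hstep⟩ := exists_seq_of_forall_exists
    (P := fun h : X →ᵇ ℝ ↦ IsCutoff h ∧ μ (1 - h) < τ)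
    (R := fun n h h' (γ : StrongDual ℝ F) ↦ h' ≤ h ∧
      HasLocalLipschitzBound (γ ∘ δ) (fun z ↦ h z - h' z + ε n) ∧ ∃ z ∈ Γ, 9 * τ ≤ γ z)
    (a₀ := 1) ⟨isCutoff_one, by simpa using hτ⟩ fun n h hh ↦ by
      obtain ⟨h', hh', hh'μ, hle, hγ⟩ := hδ.exists_isCutoff_le_exists_le_apply hΓ hxΓ hφ hτ hθ hμ
        (hε n) ((hεε₀ n).trans hε₀1) (le_trans (by gcongr; exact hεε₀ n) hε₀m) hh.1 hh.2
      exact ⟨h', ⟨hh', hh'μ⟩, hγ.imp fun γ hγ ↦ ⟨hle, hγ⟩⟩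
  refine ⟨γ, hδ.isWUC_of_sum_le (L := 1 + ∑' n, ε n) (fun n ↦ (hstep n).2.2.1) fun s z ↦ ?_,
    fun n ↦ (hstep n).2.2.2⟩
  push_cast
  exact sum_sub_succ_add_le (h := fun n ↦ h n z) (by simp [h0]) (fun n ↦ (hstep n).1.1.nonneg z)
    (antitone_nat_of_succ_le fun n ↦ (hstep n).2.1 z) (fun n ↦ (ε n).2)
    (NNReal.summable_coe.2 hεsum.summable) s

end Iteration

theorem propertyVStar_lipschitzFree_hilbert_general {X : Type*} [NormedAddCommGroup X]
    [InnerProductSpace ℝ X] {F : Type*} [NormedAddCommGroup F] [NormedSpace ℝ F] [CompleteSpace F]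
    (δ : X → F) (hδ : IsLipschitzFree (0 : X) δ) : HasPropertyVStar F := by
  intro Γ hΓ
  by_contra hcpt
  obtain ⟨θ, hθ, φ, x, hxΓ, hφ⟩ := exists_isJamesSequence_of_not_relWeaklyCompact hΓ.isBounded hcpt
  obtain ⟨m, hm, hΓm⟩ := hΓ.isBounded.subset_closedBall_lt 0 0
  have hτ : 0 < θ / 36 := by positivity
  obtain ⟨μ, hμ⟩ := exists_isFrequentlyDominated hτ fun k ↦
    hδ.closedBall_subset_closure_dominatedSet hm (hΓm (hxΓ k))
  obtain ⟨γ, hγ, hlarge⟩ := hδ.exists_isWUC_forall_exists_le_apply hΓ hxΓ hφ hτ (by linarith) hμ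
  obtain ⟨n, hn⟩ := (hΓ γ hγ (θ / 36) hτ).exists
  obtain ⟨z, hz, hγz⟩ := hlarge n
  linarith [le_abs_self (γ n z), hn z hz]

/-- If `X` is a real Hilbert space, regarded as a pointed metric space with the norm
metric and base point `0`, then the Lipschitz-free space `F(X)` has property (V*). -/
theorem propertyVStar_lipschitzFree_hilbert
    {X : Type*} [NormedAddCommGroup X] [InnerProductSpace ℝ X] [CompleteSpace X]
    {F : Type*} [NormedAddCommGroup F] [NormedSpace ℝ F] [CompleteSpace F]
    (δ : X → F) (hδ : IsLipschitzFree (0 : X) δ) :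
    HasPropertyVStar F :=
  propertyVStar_lipschitzFree_hilbert_general δ hδ
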